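/- arXiv:math/0501524 — 2 statements merged into one kernel-verified Lean document; each statement's English description precedes it below -/
import Mathlib

section
/- If ℬ is a family of topological spaces such that every uncountable regular Hausdorff topological space of cardinality ℵ₁ has an uncountable subspace homeomorphic to a member of ℬ, then ℬ has cardinality at least ℵ₂. In particular, any basis (with respect to taking uncountable subspaces) for the class of uncountable regular Hausdorff spaces has cardinality strictly greater than ℵ₁. -/
section MooreProof

open Set

/-- An abstract copy of the first uncountable ordinal. -/
class OmegaOne (W : Type) [LinearOrder W] [OrderBot W] : Prop where
  wf : WellFoundedLT W
  ctbl : ∀ w : W, (Iio w).Countable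
  unc : Uncountable W

namespace Moore

variable {W : Type} [LinearOrder W] [OrderBot W] [OmegaOne W]

instance instWFmoore : WellFoundedLT W := OmegaOne.wf

theorem bdd_of_countable {s : Set W} (hs : s.Countable) : ∃ γ : W, ∀ x ∈ s, x < γ := by
  by_contra! h
  have : (univ : Set W) ⊆ ⋃ x ∈ s, Iic x := by
    intro γ _
    obtain ⟨x, hx, hγ⟩ := h γ
    simp only [mem_iUnion]
    exact ⟨x, hx, hγ⟩
  have h2 : (⋃ x ∈ s, Iic x).Countable := by
    refine hs.biUnion fun x _ => ?_
    have := (OmegaOne.ctbl x).union (countable_singleton x)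
    refine this.mono ?_
    intro y hy
    rcases lt_or_eq_of_le (show y ≤ x from hy) with h | h
    · exact Or.inl h
    · exact Or.inr h
  have h3 := h2.mono this
  have := OmegaOne.unc (W := W)
  exact not_countable_univ h3

theorem exists_gt' (w : W) : ∃ v : W, w < v := by
  obtain ⟨v, hv⟩ := bdd_of_countable (countable_singleton w)
  exact ⟨v, hv w rfl⟩

/-- Limit elements. -/
def Lim (δ : W) : Prop := ⊥ < δ ∧ ∀ γ < δ, ∃ γ' < δ, γ < γ'

set_option linter.unusedSectionVars false

theorem Lim.finset {δ : W} (h : Lim δ) (s : Finset W) (hs : ∀ x ∈ s, x < δ) :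
    ∃ γ < δ, ∀ x ∈ s, x < γ := by
  classical
  induction s using Finset.induction_on with
  | empty => exact ⟨⊥, h.1, by simp⟩
  | insert a s _ ih =>
    obtain ⟨γ, hγ, h1⟩ := ih fun x hx => hs x (Finset.mem_insert_of_mem hx)
    have ha := hs a (Finset.mem_insert_self _ _)
    obtain ⟨γ', hγ', h2⟩ := h.2 (max γ a) (max_lt hγ ha)
    refine ⟨γ', hγ', fun x hx => ?_⟩
    rcases Finset.mem_insert.1 hx with rfl | hx
    · exact lt_of_le_of_lt (le_max_right _ _) h2
    · exact (h1 x hx).trans (lt_of_le_of_lt (le_max_left _ _) h2)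

theorem Lim.finite {δ : W} (h : Lim δ) {ι : Type*} [Finite ι] (f : ι → W) (hs : ∀ i, f i < δ) :
    ∃ γ < δ, ∀ i, f i < γ := by
  classical
  have := Fintype.ofFinite ι
  obtain ⟨γ, h1, h2⟩ := h.finset (Finset.univ.image f) (by simpa using hs)
  exact ⟨γ, h1, fun i => h2 _ (by simp)⟩

theorem closure_pt (G : W → W) (γ0 : W) : ∃ δ, γ0 < δ ∧ Lim δ ∧ ∀ γ < δ, G γ < δ := by
  have h1 : ∀ γ : W, ∃ γ', γ < γ' ∧ ∀ x ≤ γ, G x < γ' := by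
    intro γ
    obtain ⟨v, hv⟩ := exists_gt' γ
    obtain ⟨u, hu⟩ := bdd_of_countable (((OmegaOne.ctbl v).image G).union (countable_singleton γ))
    refine ⟨u, hu γ (Or.inr rfl), fun x hx => hu _ (Or.inl ⟨x, lt_of_le_of_lt hx hv, rfl⟩)⟩
  choose H hH1 hH2 using h1
  let d : ℕ → W := fun n => H^[n] γ0
  have hd : ∀ n, d (n+1) = H (d n) := fun n => Function.iterate_succ_apply' H n γ0
  obtain ⟨u, hu⟩ := bdd_of_countable (countable_range d)
  have hne : {x | ∀ n, d n < x}.Nonempty := ⟨u, fun n => hu _ ⟨n, rfl⟩⟩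
  let δ := WellFounded.min (wellFounded_lt (α := W)) {x | ∀ n, d n < x} hne
  have hδ : ∀ n, d n < δ := WellFounded.min_mem (wellFounded_lt (α := W)) _ hne
  have hmin : ∀ γ < δ, ∃ n, γ ≤ d n := by
    intro γ hγ
    by_contra! h
    exact WellFounded.not_lt_min (wellFounded_lt (α := W)) {x | ∀ n, d n < x} h hγ
  refine ⟨δ, hδ 0, ⟨lt_of_le_of_lt bot_le (hδ 0), ?_⟩, ?_⟩
  · intro γ hγ
    obtain ⟨n, hn⟩ := hmin γ hγ
    exact ⟨d (n+1), hδ _, lt_of_le_of_lt hn (by rw [hd]; exact hH1 _)⟩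
  · intro γ hγ
    obtain ⟨n, hn⟩ := hmin γ hγ
    have := hH2 (d n) γ hn
    rw [← hd] at this
    exact this.trans (hδ _)

theorem reflect {P : Type*} (lvl : W → Set P) (hc : ∀ w, (lvl w).Countable) (Q : P → W → Prop)
    (γ0 : W) : ∃ δ, γ0 < δ ∧ Lim δ ∧ ∀ w < δ, ∀ p ∈ lvl w, (∃ v, Q p v) → ∃ v < δ, Q p v := by
  classical
  let f : P → W := fun p => if h : ∃ v, Q p v then h.choose else ⊥
  have h1 : ∀ w, ∃ u, ∀ p ∈ lvl w, f p < u := by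
    intro w
    obtain ⟨u, hu⟩ := bdd_of_countable ((hc w).image f)
    exact ⟨u, fun p hp => hu _ ⟨p, hp, rfl⟩⟩
  choose G hG using h1
  obtain ⟨δ, h0, h1, h2⟩ := closure_pt G γ0
  refine ⟨δ, h0, h1, fun w hw p hp hv => ⟨f p, (hG w p hp).trans (h2 w hw), ?_⟩⟩
  simp only [f, dif_pos hv]
  exact hv.choose_spec

theorem pigeon {Q : Type*} [Countable Q] {I : Type*} (c : I → Q) (R : W → I → Prop)
    (hR : ∀ γ γ' i, γ ≤ γ' → R γ' i → R γ i)
    (h : ∀ γ, ∃ i, R γ i) : ∃ q, ∀ γ, ∃ i, c i = q ∧ R γ i := by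
  by_contra! hh
  choose g hg using hh
  obtain ⟨u, hu⟩ := bdd_of_countable (countable_range g)
  obtain ⟨i, hi⟩ := h u
  exact hg (c i) i rfl (hR _ _ _ (hu _ ⟨c i, rfl⟩).le hi)

theorem unb_of_uncountable {I : Type*} (f : I → W) (hf : ∀ w, {i | f i = w}.Countable)
    (hI : ¬ (univ : Set I).Countable) (s : Set I) (hs : s.Countable) (γ : W) :
    ∃ i ∉ s, γ ≤ f i := by
  by_contra! h
  apply hI
  have : (univ : Set I) ⊆ s ∪ ⋃ w ∈ Iio γ, {i | f i = w} := by
    intro i _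
    by_cases hi : i ∈ s
    · exact Or.inl hi
    · right
      simp only [mem_iUnion]
      exact ⟨f i, h i hi, rfl⟩
  exact (hs.union ((OmegaOne.ctbl γ).biUnion fun w _ => hf w)).mono this

/-! ### C-sequence -/

theorem exC (β : W) : ∃ C : Set W, (∀ c ∈ C, c < β) ∧ (⊥ < β → ⊥ ∈ C) ∧
    (∀ α < β, (C ∩ Iio α).Finite) ∧ (∀ α < β, ∃ c ∈ C, α ≤ c) := by
  by_cases hβ : ⊥ < β
  · have hne : (Iio β).Nonempty := ⟨⊥, hβ⟩
    obtain ⟨g, hg⟩ := (OmegaOne.ctbl β).exists_eq_range hne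
    have hgl : ∀ n, g n < β := fun n => by
      have : g n ∈ Iio β := hg ▸ mem_range_self n
      exact this
    let c : ℕ → W := fun n => (Finset.range (n+1)).sup g
    have hc : ∀ n, c n < β := fun n => by
      rw [Finset.sup_lt_iff hβ]
      exact fun m _ => hgl m
    have hgc : ∀ m n, m ≤ n → g m ≤ c n := fun m n h =>
      Finset.le_sup (f := g) (Finset.mem_range.2 (by omega))
    refine ⟨insert ⊥ (range c), ?_, fun _ => mem_insert _ _, ?_, ?_⟩
    · rintro x (rfl | ⟨n, rfl⟩)
      · exact hβ
      · exact hc n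
    · intro α hα
      have : α ∈ range g := hg ▸ hα
      obtain ⟨m, rfl⟩ := this
      refine (((finite_lt_nat m).image c).insert ⊥).subset ?_
      rintro x ⟨rfl | ⟨n, rfl⟩, h2⟩
      · exact mem_insert _ _
      · refine mem_insert_of_mem _ ⟨n, ?_, rfl⟩
        by_contra h
        exact absurd (hgc m n (not_lt.1 h)) (not_le.2 h2)
    · intro α hα
      have : α ∈ range g := hg ▸ hα
      obtain ⟨m, rfl⟩ := this
      exact ⟨c m, mem_insert_of_mem _ ⟨m, rfl⟩, hgc m m le_rfl⟩
  · refine ⟨∅, by simp, fun h => absurd h hβ, by simp, fun α h => absurd (lt_of_le_of_lt bot_le h) hβ⟩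

noncomputable def C (β : W) : Set W := (exC β).choose

theorem C_lt {β c : W} (h : c ∈ C β) : c < β := (exC β).choose_spec.1 c h
theorem C_bot {β : W} (h : ⊥ < β) : ⊥ ∈ C β := (exC β).choose_spec.2.1 h
theorem C_fin {α β : W} (h : α < β) : (C β ∩ Iio α).Finite := (exC β).choose_spec.2.2.1 α h
theorem C_cof {α β : W} (h : α < β) : ∃ c ∈ C β, α ≤ c := (exC β).choose_spec.2.2.2 α h

theorem ex_nxt {α β : W} (h : α < β) : ∃ n ∈ C β, α ≤ n ∧ ∀ c ∈ C β, α ≤ c → n ≤ c := by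
  have hne : {c | c ∈ C β ∧ α ≤ c}.Nonempty := C_cof h
  have h1 := WellFounded.min_mem (wellFounded_lt (α := W)) _ hne
  refine ⟨_, h1.1, h1.2, fun c hc hac => ?_⟩
  exact not_lt.1 (WellFounded.not_lt_min (wellFounded_lt (α := W)) {c | c ∈ C β ∧ α ≤ c} ⟨hc, hac⟩)

theorem ex_low {α β : W} (h : α < β) : ∃ m, (⊥ < α → m ∈ C β ∧ m < α) ∧
    ∀ c ∈ C β, c < α → c ≤ m := by
  by_cases h0 : ⊥ < α
  · have hne : (C β ∩ Iio α).Nonempty := ⟨⊥, C_bot (h0.trans h), h0⟩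
    obtain ⟨m, hm, hmax⟩ := (C_fin h).exists_maximalFor id _ hne
    refine ⟨m, fun _ => hm, fun c hc hca => ?_⟩
    rcases le_total c m with h | h
    · exact h
    · exact hmax ⟨hc, hca⟩ h
  · exact ⟨⊥, fun h => absurd h h0, fun c _ hc => absurd (lt_of_le_of_lt bot_le hc) h0⟩

noncomputable def nxt {α β : W} (h : α < β) : W := (ex_nxt h).choose
noncomputable def low {α β : W} (h : α < β) : W := (ex_low h).choose

theorem nxt_mem {α β : W} (h : α < β) : nxt h ∈ C β := (ex_nxt h).choose_spec.1
theorem nxt_lt {α β : W} (h : α < β) : nxt h < β := C_lt (nxt_mem h)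
theorem le_nxt {α β : W} (h : α < β) : α ≤ nxt h := (ex_nxt h).choose_spec.2.1
theorem nxt_le {α β c : W} (h : α < β) (hc : c ∈ C β) (hac : α ≤ c) : nxt h ≤ c :=
  (ex_nxt h).choose_spec.2.2 c hc hac
theorem low_mem {α β : W} (h : α < β) (h0 : ⊥ < α) : low h ∈ C β := ((ex_low h).choose_spec.1 h0).1
theorem low_lt {α β : W} (h : α < β) (h0 : ⊥ < α) : low h < α := ((ex_low h).choose_spec.1 h0).2
theorem le_low {α β c : W} (h : α < β) (hc : c ∈ C β) (hac : c < α) : c ≤ low h :=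
  (ex_low h).choose_spec.2 c hc hac

open Classical in
/-- lower trace -/
noncomputable def L (α β : W) : Finset W :=
  if h : α < β then insert (low h) ((L α (nxt h)).filter (fun x => low h ≤ x)) else ∅
termination_by (wellFounded_lt (α := W)).wrap β
decreasing_by exact nxt_lt h

open Classical in
/-- the finite-to-one coherent functions -/
noncomputable def e (β ξ : W) : ℕ :=
  if h : ξ < β then max (C β ∩ Iio ξ).ncard (e (nxt h) ξ) else 0
termination_by (wellFounded_lt (α := W)).wrap β
decreasing_by exact nxt_lt h

open Classical in
theorem L_of_lt {α β : W} (h : α < β) :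
    L α β = insert (low h) ((L α (nxt h)).filter (fun x => low h ≤ x)) := by
  rw [L, dif_pos h]

theorem L_self (α : W) : L α α = ∅ := by
  rw [L, dif_neg (lt_irrefl _)]

theorem e_of_lt {ξ β : W} (h : ξ < β) : e β ξ = max (C β ∩ Iio ξ).ncard (e (nxt h) ξ) := by
  rw [e, dif_pos h]

theorem L_lt {α β x : W} (h0 : ⊥ < α) (hx : x ∈ L α β) : x < α := by
  induction β using WellFoundedLT.induction with
  | ind β ih =>
    by_cases h : α < β
    · rw [L_of_lt h, Finset.mem_insert, Finset.mem_filter] at hx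
      rcases hx with rfl | hx
      · exact low_lt h h0
      · exact ih _ (nxt_lt h) hx.1
    · rw [L, dif_neg h] at hx
      simp at hx

theorem low_mem_L {α β : W} (h : α < β) : low h ∈ L α β := by
  rw [L_of_lt h]; exact Finset.mem_insert_self _ _

theorem low_le_L {α β x : W} (h : α < β) (hx : x ∈ L α β) : low h ≤ x := by
  rw [L_of_lt h, Finset.mem_insert, Finset.mem_filter] at hx
  rcases hx with rfl | hx
  · exact le_rfl
  · exact hx.2

open Classical in
theorem L_concat {α β γ : W} (h0 : ⊥ < α) (hab : α < β) (hbc : β ≤ γ)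
    (h : ∀ x ∈ L β γ, ∀ y ∈ L α β, x < y) : L α γ = L α β ∪ L β γ := by
  induction γ using WellFoundedLT.induction with
  | ind γ ih =>
    rcases hbc.eq_or_lt with rfl | hbc
    · simp [L_self]
    have hac := hab.trans hbc
    have hb0 := h0.trans hab
    have hy := low_mem_L hab
    have hlt : low hbc < α := (h _ (low_mem_L hbc) _ hy).trans (low_lt hab h0)
    have hlow : low hac = low hbc := by
      apply le_antisymm
      · exact le_low hbc (low_mem hac h0) ((low_lt hac h0).trans hab)
      · exact le_low hac (low_mem hbc hb0) hlt
    have hnn : β ≤ nxt hac := by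
      by_contra hn
      have := le_low hbc (nxt_mem hac) (not_le.1 hn)
      exact absurd (le_nxt hac) (not_le.2 (lt_of_le_of_lt this hlt))
    have hnxt : nxt hac = nxt hbc := by
      apply le_antisymm
      · exact nxt_le hac (nxt_mem hbc) (hab.le.trans (le_nxt hbc))
      · exact nxt_le hbc (nxt_mem hac) hnn
    have hIH := ih (nxt hbc) (nxt_lt hbc) (le_nxt hbc) (by
      intro x hx y hy
      by_cases hxl : low hbc ≤ x
      · refine h x ?_ y hy
        rw [L_of_lt hbc, Finset.mem_insert, Finset.mem_filter]
        exact Or.inr ⟨hx, hxl⟩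
      · exact (not_le.1 hxl).trans (h _ (low_mem_L hbc) y hy))
    rw [L_of_lt hac, hlow, hnxt, hIH, Finset.filter_union, L_of_lt hbc]
    have : (L α β).filter (fun x => low hbc ≤ x) = L α β := by
      apply Finset.filter_true_of_mem
      intro y hy
      exact (h _ (low_mem_L hbc) y hy).le
    rw [this, Finset.union_insert]

theorem L_lim {δ γ : W} (_hδ : Lim δ) (hγ : γ < δ) :
    ∃ η < δ, ∀ α, η < α → α < δ → ∀ x ∈ L α δ, γ ≤ x := by
  obtain ⟨c, hc, hγc⟩ := C_cof hγ
  refine ⟨c, C_lt hc, fun α h1 h2 x hx => ?_⟩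
  exact hγc.trans ((le_low h2 hc h1).trans (low_le_L h2 hx))

theorem e_lim {δ : W} (hδ : Lim δ) (N : ℕ) : ∃ η < δ, ∀ ξ, η ≤ ξ → ξ < δ → N < e δ ξ := by
  have key : ∃ η < δ, N < (C δ ∩ Iio η).ncard := by
    induction N with
    | zero =>
      obtain ⟨η, h1, h2⟩ := hδ.2 _ hδ.1
      refine ⟨η, h1, ?_⟩
      rw [Set.ncard_pos (C_fin h1)]
      exact ⟨⊥, C_bot hδ.1, h2⟩
    | succ N ih =>
      obtain ⟨η, h1, h2⟩ := ih
      obtain ⟨c, hc, hηc⟩ := C_cof h1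
      obtain ⟨η', h3, h4⟩ := hδ.2 c (C_lt hc)
      refine ⟨η', h3, ?_⟩
      have hss : insert c (C δ ∩ Iio η) ⊆ C δ ∩ Iio η' := by
        rintro x (rfl | hx)
        · exact ⟨hc, h4⟩
        · exact ⟨hx.1, lt_of_lt_of_le hx.2 (hηc.trans h4.le)⟩
      have h5 := Set.ncard_le_ncard hss (C_fin h3)
      rw [Set.ncard_insert_of_notMem (fun hx => absurd hx.2 (not_lt.2 hηc)) (C_fin h1)] at h5
      omega
  obtain ⟨η, h1, h2⟩ := key
  refine ⟨η, h1, fun ξ h3 h4 => ?_⟩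
  rw [e_of_lt h4]
  refine lt_of_lt_of_le h2 (le_max_of_le_left ?_)
  exact Set.ncard_le_ncard (fun x hx => ⟨hx.1, lt_of_lt_of_le hx.2 h3⟩) (C_fin h4)

theorem e_coh {δ β : W} (hδ : Lim δ) (h : δ ≤ β) :
    ∃ η < δ, ∀ ξ, η ≤ ξ → ξ < δ → e β ξ = e δ ξ := by
  induction β using WellFoundedLT.induction with
  | ind β ih =>
    rcases h.eq_or_lt with rfl | h
    · exact ⟨⊥, hδ.1, fun _ _ _ => rfl⟩
    obtain ⟨η1, h1, h1'⟩ := ih (nxt h) (nxt_lt h) (le_nxt h)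
    obtain ⟨η2, h2, h2'⟩ := e_lim hδ (C β ∩ Iio δ).ncard
    obtain ⟨η3, h3, h3'⟩ := hδ.2 (low h) (low_lt h hδ.1)
    refine ⟨max (max η1 η2) η3, max_lt (max_lt h1 h2) h3, fun ξ hξ hξδ => ?_⟩
    have e1 : η1 ≤ ξ := le_trans (by simp) hξ
    have e2 : η2 ≤ ξ := le_trans (by simp) hξ
    have e3 : η3 ≤ ξ := le_trans (by simp) hξ
    have hξβ := hξδ.trans h
    have hn : nxt hξβ = nxt h := by
      apply le_antisymm
      · exact nxt_le hξβ (nxt_mem h) (hξδ.le.trans (le_nxt h))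
      · refine nxt_le h (nxt_mem hξβ) ?_
        by_contra hh
        exact absurd (le_nxt hξβ) (not_le.2 (lt_of_le_of_lt (le_low h (nxt_mem hξβ) (not_le.1 hh))
          (h3'.trans_le e3)))
    rw [e_of_lt hξβ, hn, h1' ξ e1 hξδ]
    apply max_eq_right
    refine le_trans ?_ (h2' ξ e2 hξδ).le
    exact Set.ncard_le_ncard (fun x hx => ⟨hx.1, lt_trans hx.2 hξδ⟩) (C_fin h)

theorem e_lim' {δ β : W} (hδ : Lim δ) (h : δ ≤ β) (N : ℕ) :
    ∃ η < δ, ∀ ξ, η ≤ ξ → ξ < δ → N < e β ξ := by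
  obtain ⟨η1, h1, h1'⟩ := e_coh hδ h
  obtain ⟨η2, h2, h2'⟩ := e_lim hδ N
  refine ⟨max η1 η2, max_lt h1 h2, fun ξ hξ hξδ => ?_⟩
  rw [h1' ξ ((le_max_left _ _).trans hξ) hξδ]
  exact h2' ξ ((le_max_right _ _).trans hξ) hξδ

end Moore
open Set

namespace Moore

variable {W : Type} [LinearOrder W] [OrderBot W] [OmegaOne W]

set_option linter.unusedSectionVars false

open Classical in
/-- oscillation number of two functions on a finite set -/
noncomputable def Osc (s t : W → ℕ) (F : Finset W) : ℕ :=
  (F.filter (fun ξ => t ξ < s ξ ∧ ∃ η ∈ F, η < ξ ∧ s η ≤ t η ∧ ∀ ζ ∈ F, ζ < ξ → ζ ≤ η)).card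

theorem Osc_congr {s t s' t' : W → ℕ} {F : Finset W} (hs : ∀ x ∈ F, s x = s' x)
    (ht : ∀ x ∈ F, t x = t' x) : Osc s t F = Osc s' t' F := by
  classical
  unfold Osc
  congr 1
  apply Finset.filter_congr
  intro x hx
  rw [hs x hx, ht x hx]
  have : ∀ η, (η ∈ F ∧ η < x ∧ s η ≤ t η ∧ ∀ ζ ∈ F, ζ < x → ζ ≤ η) ↔
    (η ∈ F ∧ η < x ∧ s' η ≤ t' η ∧ ∀ ζ ∈ F, ζ < x → ζ ≤ η) := by
    intro η
    constructor
    · rintro ⟨h1, h2⟩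
      rw [hs η h1, ht η h1] at h2
      exact ⟨h1, h2⟩
    · rintro ⟨h1, h2⟩
      rw [← hs η h1, ← ht η h1] at h2
      exact ⟨h1, h2⟩
  simp only [this]

open Classical in
theorem Osc_two {s t : W → ℕ} {G H1 H2 : Finset W} (h1 : H1.Nonempty) (h2 : H2.Nonempty)
    (hG1 : ∀ x ∈ G, ∀ y ∈ H1, x < y) (h12 : ∀ x ∈ H1, ∀ y ∈ H2, x < y)
    (hs1 : ∀ x ∈ H1, s x ≤ t x) (hs2 : ∀ x ∈ H2, t x < s x) :
    Osc s t (G ∪ H1 ∪ H2) = Osc s t G + 1 := by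
  have hG2 : ∀ x ∈ G, ∀ y ∈ H2, x < y := fun x hx y hy => by
    obtain ⟨z, hz⟩ := h1
    exact (hG1 x hx z hz).trans (h12 z hz y hy)
  unfold Osc
  have hnot : H2.min' h2 ∉ G.filter (fun ξ => t ξ < s ξ ∧ ∃ η ∈ G, η < ξ ∧ s η ≤ t η ∧
      ∀ ζ ∈ G, ζ < ξ → ζ ≤ η) := by
    intro h
    exact lt_irrefl _ (hG2 _ (Finset.mem_filter.1 h).1 _ (Finset.min'_mem H2 h2))
  rw [← Finset.card_insert_of_notMem hnot]
  congr 1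
  ext x
  simp only [Finset.mem_filter, Finset.mem_union, Finset.mem_insert]
  constructor
  · rintro ⟨(hx | hx) | hx, hts, η, hη, hηx, hle, hmax⟩
    · right
      refine ⟨hx, hts, η, ?_, hηx, hle, fun ζ hζ => hmax ζ (Or.inl (Or.inl hζ))⟩
      rcases hη with (hη | hη) | hη
      · exact hη
      · exact absurd hηx (not_lt.2 (hG1 x hx η hη).le)
      · exact absurd hηx (not_lt.2 (hG2 x hx η hη).le)
    · exact absurd hts (not_lt.2 (hs1 x hx))
    · left
      by_contra hne
      have hlt : H2.min' h2 < x := lt_of_le_of_ne (Finset.min'_le _ _ hx) (Ne.symm hne)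
      have h3 := hmax _ (Or.inr (Finset.min'_mem H2 h2)) hlt
      rcases hη with (hη | hη) | hη
      · exact absurd h3 (not_le.2 (hG2 _ hη _ (Finset.min'_mem H2 h2)))
      · exact absurd h3 (not_le.2 (h12 _ hη _ (Finset.min'_mem H2 h2)))
      · exact absurd hle (not_le.2 (hs2 _ hη))
  · rintro (rfl | ⟨hx, hts, η, hη, hηx, hle, hmax⟩)
    · have hm := Finset.min'_mem H2 h2
      refine ⟨Or.inr hm, hs2 _ hm, H1.max' h1, Or.inl (Or.inr (Finset.max'_mem H1 h1)),
        h12 _ (Finset.max'_mem H1 h1) _ hm, hs1 _ (Finset.max'_mem H1 h1), ?_⟩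
      rintro ζ ((hζ | hζ) | hζ) hlt
      · exact (hG1 _ hζ _ (Finset.max'_mem H1 h1)).le
      · exact Finset.le_max' _ _ hζ
      · exact absurd hlt (not_lt.2 (Finset.min'_le _ _ hζ))
    · refine ⟨Or.inl (Or.inl hx), hts, η, Or.inl (Or.inl hη), hηx, hle, ?_⟩
      rintro ζ ((hζ | hζ) | hζ) hlt
      · exact hmax ζ hζ hlt
      · exact absurd hlt (not_lt.2 (hG1 _ hx _ hζ).le)
      · exact absurd hlt (not_lt.2 (hG2 _ hx _ hζ).le)

open Classical in
theorem Osc_tail {s t : W → ℕ} {G H : Finset W} (hGH : ∀ x ∈ G, ∀ y ∈ H, x < y)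
    {g : W} (hg : g ∈ G) (hgm : ∀ x ∈ G, x ≤ g) (hgs : t g < s g) :
    Osc s t (G ∪ H) = Osc s t G + Osc s t H := by
  unfold Osc
  rw [← Finset.card_union_of_disjoint]
  · congr 1
    ext x
    simp only [Finset.mem_filter, Finset.mem_union]
    constructor
    · rintro ⟨hx | hx, hts, η, hη, hηx, hle, hmax⟩
      · left
        refine ⟨hx, hts, η, ?_, hηx, hle, fun ζ hζ => hmax ζ (Or.inl hζ)⟩
        rcases hη with hη | hη
        · exact hη
        · exact absurd hηx (not_lt.2 (hGH x hx η hη).le)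
      · right
        refine ⟨hx, hts, η, ?_, hηx, hle, fun ζ hζ => hmax ζ (Or.inr hζ)⟩
        rcases hη with hη | hη
        · have := hmax g (Or.inl hg) (hGH _ hg _ hx)
          have : η = g := le_antisymm (hgm _ hη) this
          subst this
          exact absurd hle (not_le.2 hgs)
        · exact hη
    · rintro (⟨hx, hts, η, hη, hηx, hle, hmax⟩ | ⟨hx, hts, η, hη, hηx, hle, hmax⟩)
      · refine ⟨Or.inl hx, hts, η, Or.inl hη, hηx, hle, ?_⟩
        rintro ζ (hζ | hζ) hlt
        · exact hmax ζ hζ hlt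
        · exact absurd hlt (not_lt.2 (hGH _ hx _ hζ).le)
      · refine ⟨Or.inr hx, hts, η, Or.inr hη, hηx, hle, ?_⟩
        rintro ζ (hζ | hζ) hlt
        · exact (hGH _ hζ _ hη).le
        · exact hmax ζ hζ hlt
  · rw [Finset.disjoint_left]
    intro x hx hx'
    exact lt_irrefl _ (hGH _ (Finset.mem_filter.1 hx).1 _ (Finset.mem_filter.1 hx').1)

/-- the oscillation map -/
noncomputable def osc (α β : W) : ℕ := Osc (e α) (e β) (L α β)

variable {ι κ : Type} [Finite ι] [Finite κ]

theorem unb_e (E : Set (ι → W)) (hE : ∀ γ, ∃ a ∈ E, ∀ i, γ ≤ a i) :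
    ∃ γ1 : W, ∀ F : Finset W, (∀ x ∈ F, γ1 ≤ x) → ∀ (N : ℕ) (ζ : W),
      ∃ a ∈ E, (∀ i, ζ ≤ a i) ∧ ∀ i, ∀ x ∈ F, N < e (a i) x := by
  by_contra! h
  choose F hF N ζ hbad using h
  obtain ⟨N0, hN0⟩ := pigeon N (fun γ γ' => γ ≤ γ') (fun _ _ _ h h' => h.trans h')
    (fun γ => ⟨γ, le_rfl⟩)
  obtain ⟨δ, -, hlim, hδ⟩ := reflect (fun w : W => ({w} : Set W)) (fun w => countable_singleton w)
    (fun γ v => ∃ γ', N γ' = N0 ∧ γ ≤ γ' ∧ (∀ x ∈ F γ', x < v) ∧ ζ γ' ≤ v) ⊥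
  obtain ⟨a, ha, haδ⟩ := hE δ
  have h1 : ∀ i, ∃ η < δ, ∀ ξ, η ≤ ξ → ξ < δ → N0 < e (a i) ξ := fun i => e_lim' hlim (haδ i) N0
  choose η hη hη' using h1
  obtain ⟨γ, hγ, hγ'⟩ := hlim.finite η hη
  obtain ⟨v, hv, γ', hN, hle, hFv, hζ⟩ := hδ γ hγ γ rfl (by
    obtain ⟨γ', h1, h2⟩ := hN0 γ
    obtain ⟨v, hv⟩ := bdd_of_countable ((F γ').countable_toSet.union (countable_singleton (ζ γ')))
    exact ⟨v, γ', h1, h2, fun x hx => hv x (Or.inl hx), (hv _ (Or.inr rfl)).le⟩)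
  obtain ⟨i, x, hx, hxN⟩ := hbad γ' a ha (fun i => hζ.trans (hv.le.trans (haδ i)))
  rw [hN] at hxN
  exact absurd (hη' i x ((hγ' i).le.trans (hle.trans (hF γ' x hx))) ((hFv x hx).trans hv))
    (not_lt.2 hxN)

def EX (X : Finset (W × ι × ℕ)) (a : ι → W) : Prop := ∀ x ∈ X, e (a x.2.1) x.1 = x.2.2

def EY (Y : Finset (W × κ × ℕ)) (δ : W) (b : κ → W) : Prop :=
  (∀ y ∈ Y, e (b y.2.1) y.1 = y.2.2) ∧ ∀ j ξ, ξ ∈ L δ (b j) ↔ ∃ v, (ξ, j, v) ∈ Y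

def DD (A : Set (ι → W)) (B : Set (κ → W)) (X : Finset (W × ι × ℕ)) (Y : Finset (W × κ × ℕ))
    (γ ξ δ : W) : Prop :=
  (∃ a ∈ A, ∃ b ∈ B, (∀ i, δ ≤ a i) ∧ (∀ j, δ ≤ b j) ∧ EX X a ∧ EY Y δ b ∧
    ∀ i j x, γ ≤ x → x < δ → e (a i) x = e (b j) x) ∧ ∀ x ∈ L ξ δ, γ ≤ x

structure Good (A : Set (ι → W)) (B : Set (κ → W)) (δ : W) : Prop where
  lim : Lim δ
  r0 : ∀ X Y, (∀ x ∈ X, x.1 < δ) → (∀ y ∈ Y, y.1 < δ) → ∀ γ < δ, ∀ ξ < δ,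
    (∃ v, ∀ δ' ≥ v, ¬ DD A B X Y γ ξ δ') → ∃ v < δ, ∀ δ' ≥ v, ¬ DD A B X Y γ ξ δ'
  r1 : ∀ X Y, (∀ x ∈ X, x.1 < δ) → (∀ y ∈ Y, y.1 < δ) → ∀ γ < δ, ∀ ξ < δ,
    (∃ v, ξ < v ∧ ∃ u, ∀ δ' ≥ u, ¬ DD A B X Y γ v δ') →
      ∃ v < δ, ξ < v ∧ ∃ u, ∀ δ' ≥ u, ¬ DD A B X Y γ v δ'
  r2 : ∀ X : Finset (W × ι × ℕ), (∀ x ∈ X, x.1 < δ) →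
    (∃ v, ∀ a ∈ A, EX X a → ¬ ∀ i, v ≤ a i) → ∃ v < δ, ∀ a ∈ A, EX X a → ¬ ∀ i, v ≤ a i
  r3 : ∀ X : Finset (W × ι × ℕ), (∀ x ∈ X, x.1 < δ) →
    (∃ v, ∀ F : Finset W, (∀ x ∈ F, v ≤ x) → ∀ (N : ℕ) (ζ : W),
      ∃ a ∈ {a ∈ A | EX X a}, (∀ i, ζ ≤ a i) ∧ ∀ i, ∀ x ∈ F, N < e (a i) x) →
    ∃ v < δ, ∀ F : Finset W, (∀ x ∈ F, v ≤ x) → ∀ (N : ℕ) (ζ : W),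
      ∃ a ∈ {a ∈ A | EX X a}, (∀ i, ζ ≤ a i) ∧ ∀ i, ∀ x ∈ F, N < e (a i) x
  r4 : ∀ X : Finset (W × ι × ℕ), (∀ x ∈ X, x.1 < δ) → ∀ γ < δ,
    (∃ v, ∃ a ∈ A, EX X a ∧ ∀ i, γ ≤ a i ∧ a i < v) →
    ∃ v < δ, ∃ a ∈ A, EX X a ∧ ∀ i, γ ≤ a i ∧ a i < v

theorem ctbl_finsets {τ : Type} [Countable τ] (w : W) :
    {X : Finset (W × τ) | ∀ x ∈ X, x.1 < w}.Countable := by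
  have h1 : (Iio w ×ˢ (univ : Set τ)).Countable := (OmegaOne.ctbl w).prod countable_univ
  have h2 := Set.countable_ofPred_finite_subset h1
  refine (h2.preimage_of_injOn (f := fun X : Finset (W × τ) => (X : Set (W × τ)))
    Finset.coe_injective.injOn).mono ?_
  intro X hX
  exact ⟨X.finite_toSet, fun x hx => ⟨hX x hx, trivial⟩⟩

theorem exists_good (A : Set (ι → W)) (B : Set (κ → W)) : ∃ δ : W, Good A B δ := by
  classical
  let P := Fin 5 × Finset (W × ι × ℕ) × Finset (W × κ × ℕ) × W × W
  let lvl : W → Set P := fun w => univ ×ˢ {X | ∀ x ∈ X, x.1 < w} ×ˢ {Y | ∀ x ∈ Y, x.1 < w} ×ˢ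
    Iio w ×ˢ Iio w
  have hc : ∀ w, (lvl w).Countable := fun w => countable_univ.prod ((ctbl_finsets w).prod
    ((ctbl_finsets w).prod ((OmegaOne.ctbl w).prod (OmegaOne.ctbl w))))
  let Q : P → W → Prop := fun p v => match p with
    | (0, X, Y, γ, ξ) => ∀ δ' ≥ v, ¬ DD A B X Y γ ξ δ'
    | (1, X, Y, γ, ξ) => ξ < v ∧ ∃ u, ∀ δ' ≥ u, ¬ DD A B X Y γ v δ'
    | (2, X, _, _, _) => ∀ a ∈ A, EX X a → ¬ ∀ i, v ≤ a i
    | (3, X, _, _, _) => ∀ F : Finset W, (∀ x ∈ F, v ≤ x) → ∀ (N : ℕ) (ζ : W),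
      ∃ a ∈ {a ∈ A | EX X a}, (∀ i, ζ ≤ a i) ∧ ∀ i, ∀ x ∈ F, N < e (a i) x
    | (4, X, _, γ, _) => ∃ a ∈ A, EX X a ∧ ∀ i, γ ≤ a i ∧ a i < v
  obtain ⟨δ, -, hlim, hδ⟩ := reflect lvl hc Q ⊥
  have key : ∀ (c : Fin 5) X Y γ ξ, (∀ x ∈ X, x.1 < δ) → (∀ y ∈ Y, y.1 < δ) → γ < δ → ξ < δ →
      (∃ v, Q (c, X, Y, γ, ξ) v) → ∃ v < δ, Q (c, X, Y, γ, ξ) v := by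
    intro c X Y γ ξ hX hY hγ hξ
    obtain ⟨w, hw, hw'⟩ := hlim.finset (X.image Prod.fst ∪ Y.image Prod.fst ∪ {γ, ξ}) (by
      intro x hx
      simp only [Finset.mem_union, Finset.mem_image, Finset.mem_insert, Finset.mem_singleton] at hx
      rcases hx with (⟨y, hy, rfl⟩ | ⟨y, hy, rfl⟩) | rfl | rfl
      · exact hX y hy
      · exact hY y hy
      · exact hγ
      · exact hξ)
    refine hδ w hw _ ⟨trivial, ?_, ?_, ?_, ?_⟩
    · intro x hx
      exact hw' _ (by
        simp only [Finset.mem_union, Finset.mem_image]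
        exact Or.inl (Or.inl ⟨x, hx, rfl⟩))
    · intro x hx
      exact hw' _ (by
        simp only [Finset.mem_union, Finset.mem_image]
        exact Or.inl (Or.inr ⟨x, hx, rfl⟩))
    · exact hw' _ (by simp)
    · exact hw' _ (by simp)
  refine ⟨δ, hlim, ?_, ?_, ?_, ?_, ?_⟩
  · intro X Y hX hY γ hγ ξ hξ
    exact key 0 X Y γ ξ hX hY hγ hξ
  · intro X Y hX hY γ hγ ξ hξ
    exact key 1 X Y γ ξ hX hY hγ hξ
  · intro X hX
    exact key 2 X ∅ ⊥ ⊥ hX (by simp) hlim.1 hlim.1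
  · intro X hX
    exact key 3 X ∅ ⊥ ⊥ hX (by simp) hlim.1 hlim.1
  · intro X hX γ hγ
    exact key 4 X ∅ γ ⊥ hX (by simp) hγ hlim.1

open Classical in
noncomputable def code [Fintype ι] (U : Finset W) (a : ι → W) : Finset (W × ι × ℕ) :=
  (U ×ˢ Finset.univ).image fun p => (p.1, p.2, e (a p.2) p.1)

theorem EX_code [Fintype ι] (U : Finset W) (a a' : ι → W) :
    EX (code U a) a' ↔ ∀ i, ∀ x ∈ U, e (a' i) x = e (a i) x := by
  classical
  unfold EX code
  simp only [Finset.mem_image, Finset.mem_product, Finset.mem_univ, and_true]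
  constructor
  · intro h i x hx
    exact h (x, i, e (a i) x) ⟨(x, i), hx, rfl⟩
  · rintro h _ ⟨p, hp, rfl⟩
    exact h _ _ hp

theorem code_lt [Fintype ι] {U : Finset W} {a : ι → W} {δ : W} (h : ∀ x ∈ U, x < δ) :
    ∀ x ∈ code U a, x.1 < δ := by
  classical
  unfold code
  simp only [Finset.mem_image, Finset.mem_product, Finset.mem_univ, and_true]
  rintro _ ⟨p, hp, rfl⟩
  exact h _ hp

open Classical in
noncomputable def codeB [Fintype κ] (δ : W) (b : κ → W) : Finset (W × κ × ℕ) :=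
  Finset.univ.biUnion fun j => (L δ (b j)).image fun x => (x, j, e (b j) x)

theorem mem_codeB [Fintype κ] (δ : W) (b : κ → W) (x : W) (j : κ) (v : ℕ) :
    (x, j, v) ∈ codeB δ b ↔ x ∈ L δ (b j) ∧ v = e (b j) x := by
  classical
  unfold codeB
  simp only [Finset.mem_biUnion, Finset.mem_univ, true_and, Finset.mem_image, Prod.mk.injEq]
  constructor
  · rintro ⟨j', x', hx, rfl, rfl, rfl⟩
    exact ⟨hx, rfl⟩
  · rintro ⟨hx, rfl⟩
    exact ⟨j, x, hx, rfl, rfl, rfl⟩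

theorem EY_codeB [Fintype κ] (δ δ' : W) (b b' : κ → W) :
    EY (codeB δ b) δ' b' ↔ ∀ j, L δ' (b' j) = L δ (b j) ∧ ∀ x ∈ L δ (b j), e (b' j) x = e (b j) x := by
  unfold EY
  constructor
  · rintro ⟨h1, h2⟩ j
    refine ⟨?_, ?_⟩
    · ext x
      rw [h2]
      simp [mem_codeB]
    · intro x hx
      exact h1 (x, j, e (b j) x) ((mem_codeB _ _ _ _ _).2 ⟨hx, rfl⟩)
  · intro h
    refine ⟨?_, ?_⟩
    · rintro ⟨x, j, v⟩ hy
      rw [mem_codeB] at hy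
      simp only
      rw [(h j).2 x hy.1, hy.2]
    · intro j x
      rw [(h j).1]
      simp [mem_codeB]

theorem exists_up (δ : W) (f : ι → W) : ∃ v, δ ≤ v ∧ ∀ i, f i < v := by
  obtain ⟨v, hv⟩ := bdd_of_countable ((countable_singleton δ).union (Set.finite_range f).countable)
  exact ⟨v, (hv _ (Or.inl rfl)).le, fun i => hv _ (Or.inr ⟨i, rfl⟩)⟩

open Classical in
theorem step [Fintype ι] [Fintype κ] {A : Set (ι → W)} {B : Set (κ → W)} {δ : W} (hδ : Good A B δ)
    {a : ι → W} {b : κ → W} (ha : a ∈ A) (hb : b ∈ B) (haδ : ∀ i, δ ≤ a i) (hbδ : ∀ j, δ ≤ b j) :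
    ∃ F : Finset W, F.Nonempty ∧ ∃ b' ∈ B, (∀ j, δ ≤ b' j) ∧ ∃ a1 ∈ A, (∀ i, δ ≤ a1 i) ∧
      ∃ a2 ∈ A, (∀ i, δ ≤ a2 i) ∧ (∀ j, ∀ x ∈ L δ (b j), ∀ y ∈ F, x < y) ∧
      (∀ j, L δ (b' j) = L δ (b j) ∪ F) ∧
      (∀ j, ∀ x ∈ L δ (b j), e (b' j) x = e (b j) x) ∧
      (∀ i j, ∀ x ∈ L δ (b j), e (a1 i) x = e (a i) x ∧ e (a2 i) x = e (a i) x) ∧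
      (∀ i j, ∀ x ∈ F, e (a1 i) x = e (b' j) x ∧ e (b' j) x < e (a2 i) x) := by
  have hlim := hδ.lim
  let U : Finset W := Finset.univ.biUnion fun j => L δ (b j)
  have hU : ∀ j, ∀ x ∈ L δ (b j), x ∈ U := fun j x hx => by
    simp only [U, Finset.mem_biUnion]; exact ⟨j, Finset.mem_univ _, hx⟩
  have hUδ : ∀ x ∈ U, x < δ := fun x hx => by
    simp only [U, Finset.mem_biUnion] at hx
    obtain ⟨j, -, hx⟩ := hx
    exact L_lt hlim.1 hx
  let X := code U a
  let Y := codeB δ b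
  have hX : ∀ x ∈ X, x.1 < δ := code_lt hUδ
  have hY : ∀ y ∈ Y, y.1 < δ := by
    rintro ⟨x, j, v⟩ hy
    exact L_lt hlim.1 ((mem_codeB _ _ _ _ _).1 hy).1
  have hEa : EX X a := (EX_code _ _ _).2 fun _ _ _ => rfl
  -- the subfamily is unbounded
  have hunb : ∀ γ, ∃ a' ∈ {a' ∈ A | EX X a'}, ∀ i, γ ≤ a' i := by
    by_contra! h
    obtain ⟨v, hv⟩ := h
    obtain ⟨v', hv', h2⟩ := hδ.r2 X hX ⟨v, fun a ha hE => by
      obtain ⟨i, hi⟩ := hv a ⟨ha, hE⟩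
      exact fun h => absurd (h i) (not_le.2 hi)⟩
    exact h2 a ha hEa fun i => hv'.le.trans (haδ i)
  obtain ⟨γ1, hγ1, hγ1'⟩ := hδ.r3 X hX (unb_e _ hunb)
  have hca : ∀ i, ∃ η < δ, ∀ ξ, η ≤ ξ → ξ < δ → e (a i) ξ = e δ ξ := fun i => e_coh hlim (haδ i)
  have hcb : ∀ j, ∃ η < δ, ∀ ξ, η ≤ ξ → ξ < δ → e (b j) ξ = e δ ξ := fun j => e_coh hlim (hbδ j)
  choose ηa hηa hηa' using hca
  choose ηb hηb hηb' using hcb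
  obtain ⟨γ, hγ, hγ'⟩ := hlim.finset (U ∪ {γ1} ∪ Finset.univ.image ηa ∪ Finset.univ.image ηb) (by
    intro x hx
    simp only [Finset.mem_union, Finset.mem_image, Finset.mem_singleton, Finset.mem_univ,
      true_and] at hx
    rcases hx with ((hx | rfl) | ⟨i, rfl⟩) | ⟨j, rfl⟩
    · exact hUδ x hx
    · exact hγ1
    · exact hηa i
    · exact hηb j)
  have g1 : ∀ x ∈ U, x < γ := fun x hx => hγ' x (by simp [hx])
  have g2 : γ1 < γ := hγ' _ (by simp)
  have g3 : ∀ i, ηa i < γ := fun i => hγ' _ (by simp)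
  have g4 : ∀ j, ηb j < γ := fun j => hγ' _ (by simp)
  obtain ⟨ξ0, hξ0, hξ0'⟩ := L_lim hlim hγ
  have hD : ∀ ξ, ξ0 < ξ → ξ < δ → DD A B X Y γ ξ δ := by
    intro ξ h1 h2
    refine ⟨⟨a, ha, b, hb, haδ, hbδ, hEa, (EY_codeB _ _ _ _).2 fun j => ⟨rfl, fun _ _ => rfl⟩, ?_⟩,
      hξ0' ξ h1 h2⟩
    intro i j x hx hxδ
    rw [hηa' i x ((g3 i).le.trans hx) hxδ, hηb' j x ((g4 j).le.trans hx) hxδ]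
  have hphi : ∀ ξ, ξ0 < ξ → ξ < δ → ¬ ∃ v, ∀ δ' ≥ v, ¬ DD A B X Y γ ξ δ' := by
    intro ξ h1 h2 hv
    obtain ⟨v, hv, h3⟩ := hδ.r0 X Y hX hY γ hγ ξ h2 hv
    exact h3 δ hv.le (hD ξ h1 h2)
  have hphiδ : ¬ ∃ v, ∀ δ' ≥ v, ¬ DD A B X Y γ δ δ' := by
    intro hv
    obtain ⟨v, h1, h2, h3⟩ := hδ.r1 X Y hX hY γ hγ ξ0 hξ0 ⟨δ, hξ0, hv⟩
    exact hphi v h2 h1 h3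
  push Not at hphiδ
  obtain ⟨w, hw⟩ := exists_gt' δ
  obtain ⟨δ', hδ', ⟨a1, ha1, b', hb', h1, h2, hE1, hEY, heq⟩, hL⟩ := hphiδ w
  have hlt : δ < δ' := hw.trans_le hδ'
  rw [EY_codeB] at hEY
  let N := (Finset.univ ×ˢ L δ δ').sup fun p : κ × W => e (b' p.1) p.2
  obtain ⟨a2, ha2, h3, h4⟩ := hγ1' (L δ δ') (fun x hx => g2.le.trans (hL x hx)) N δ
  refine ⟨L δ δ', ⟨_, low_mem_L hlt⟩, b', hb', fun j => hlt.le.trans (h2 j), a1, ha1,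
    fun i => hlt.le.trans (h1 i), a2, ha2.1, h3, ?_, ?_, ?_, ?_, ?_⟩
  · intro j x hx y hy
    exact (g1 x (hU j x hx)).trans_le (hL y hy)
  · intro j
    rw [L_concat hlim.1 hlt (h2 j), (hEY j).1, Finset.union_comm]
    intro x hx y hy
    rw [(hEY j).1] at hx
    exact (g1 x (hU j x hx)).trans_le (hL y hy)
  · intro j
    exact (hEY j).2
  · intro i j x hx
    exact ⟨(EX_code _ _ _).1 hE1 i x (hU j x hx), (EX_code _ _ _).1 ha2.2 i x (hU j x hx)⟩
  · intro i j x hx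
    refine ⟨heq i j x (hL x hx) ((L_lt hlim.1 hx).trans hlt), lt_of_le_of_lt ?_ (h4 i x hx)⟩
    exact Finset.le_sup (f := fun p : κ × W => e (b' p.1) p.2) (b := (j, x)) (by simp [hx])

theorem dstep [Fintype ι] [Fintype κ] {A : Set (ι → W)} {B : Set (κ → W)} {δ : W} (hδ : Good A B δ)
    {a : ι → W} {b : κ → W} (ha : a ∈ A) (hb : b ∈ B) (haδ : ∀ i, δ ≤ a i) (hbδ : ∀ j, δ ≤ b j) :
    ∃ a' ∈ A, (∀ i, δ ≤ a' i) ∧ ∃ b' ∈ B, (∀ j, δ ≤ b' j) ∧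
      (∀ j, L δ (b j) ⊆ L δ (b' j)) ∧
      (∀ i j, ∀ x ∈ L δ (b j), e (a' i) x = e (a i) x) ∧
      (∀ i j, Osc (e (a' i)) (e (b' j)) (L δ (b' j)) = Osc (e (a i)) (e (b j)) (L δ (b j)) + 1) ∧
      (∀ i j, ∃ g ∈ L δ (b' j), (∀ x ∈ L δ (b' j), x ≤ g) ∧ e (b' j) g < e (a' i) g) := by
  classical
  obtain ⟨F1, hF1, b1, hb1, hb1δ, a1, ha1, ha1δ, _, _, _, p1, p2, p3, p4, p5⟩ :=
    step hδ ha hb haδ hbδ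
  obtain ⟨F2, hF2, b2, hb2, hb2δ, _, _, _, a2, ha2, ha2δ, q1, q2, q3, q4, q5⟩ :=
    step hδ ha1 hb1 ha1δ hb1δ
  have hm1 : ∀ j, ∀ x ∈ L δ (b j), x ∈ L δ (b1 j) := fun j x hx => by
    rw [p2]; exact Finset.mem_union_left _ hx
  have hm2 : ∀ j, ∀ x ∈ F1, x ∈ L δ (b1 j) := fun j x hx => by
    rw [p2]; exact Finset.mem_union_right _ hx
  refine ⟨a2, ha2, ha2δ, b2, hb2, hb2δ, ?_, ?_, ?_, ?_⟩
  · intro j x hx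
    rw [q2]; exact Finset.mem_union_left _ (hm1 j x hx)
  · intro i j x hx
    rw [(q4 i j x (hm1 j x hx)).2, (p4 i j x hx).1]
  · intro i j
    rw [q2, p2, Osc_two hF1 hF2 (p1 j) (fun x hx => q1 j x (hm2 j x hx))]
    · congr 1
      refine Osc_congr (fun x hx => ?_) (fun x hx => ?_)
      · rw [(q4 i j x (hm1 j x hx)).2, (p4 i j x hx).1]
      · rw [q3 j x (hm1 j x hx), p3 j x hx]
    · intro x hx
      rw [(q4 i j x (hm2 j x hx)).2, q3 j x (hm2 j x hx), (p5 i j x hx).1]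
    · intro x hx
      exact (q5 i j x hx).2
  · intro i j
    refine ⟨F2.max' hF2, ?_, ?_, (q5 i j _ (Finset.max'_mem F2 hF2)).2⟩
    · rw [q2]; exact Finset.mem_union_right _ (Finset.max'_mem F2 hF2)
    · intro x hx
      rw [q2, Finset.mem_union] at hx
      rcases hx with hx | hx
      · exact (q1 j x hx _ (Finset.max'_mem F2 hF2)).le
      · exact Finset.le_max' _ _ hx

theorem main_osc (A : Set (ι → W)) (B : Set (κ → W)) (hA : ∀ γ, ∃ a ∈ A, ∀ i, γ ≤ a i)
    (hB : ∀ γ, ∃ b ∈ B, ∀ j, γ ≤ b j) (n : ℕ) :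
    ∃ a ∈ A, ∃ b : ℕ → κ → W, (∀ m, b m ∈ B) ∧
      ∀ m ≤ n, ∀ i j, a i < b m j ∧ osc (a i) (b m j) = osc (a i) (b 0 j) + m := by
  classical
  have := Fintype.ofFinite ι
  have := Fintype.ofFinite κ
  obtain ⟨δ, hδ⟩ := exists_good A B
  have hlim := hδ.lim
  let S := {p : (ι → W) × (κ → W) // p.1 ∈ A ∧ p.2 ∈ B ∧ (∀ i, δ ≤ p.1 i) ∧ ∀ j, δ ≤ p.2 j}
  have hst : ∀ p : S, ∃ q : S, (∀ j, L δ (p.1.2 j) ⊆ L δ (q.1.2 j)) ∧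
      (∀ i j, ∀ x ∈ L δ (p.1.2 j), e (q.1.1 i) x = e (p.1.1 i) x) ∧
      (∀ i j, Osc (e (q.1.1 i)) (e (q.1.2 j)) (L δ (q.1.2 j)) =
        Osc (e (p.1.1 i)) (e (p.1.2 j)) (L δ (p.1.2 j)) + 1) ∧
      (∀ i j, ∃ g ∈ L δ (q.1.2 j), (∀ x ∈ L δ (q.1.2 j), x ≤ g) ∧
        e (q.1.2 j) g < e (q.1.1 i) g) := by
    rintro ⟨⟨a, b⟩, ha, hb, haδ, hbδ⟩
    obtain ⟨a', ha', haδ', b', hb', hbδ', h⟩ := dstep hδ ha hb haδ hbδ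
    exact ⟨⟨(a', b'), ha', hb', haδ', hbδ'⟩, h⟩
  choose T hT1 hT2 hT3 hT4 using hst
  obtain ⟨a0, ha0, ha0δ⟩ := hA δ
  obtain ⟨b0, hb0, hb0δ⟩ := hB δ
  let s : ℕ → S := fun m => T^[m + 1] ⟨(a0, b0), ha0, hb0, ha0δ, hb0δ⟩
  have hs : ∀ m, s (m + 1) = T (s m) := fun m => Function.iterate_succ_apply' T _ _
  have hs' : ∀ m, ∃ p, s m = T p := fun m => ⟨_, Function.iterate_succ_apply' T _ _⟩
  let aa : ℕ → ι → W := fun m => (s m).1.1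
  let bb : ℕ → κ → W := fun m => (s m).1.2
  have hO : ∀ m i j, Osc (e (aa m i)) (e (bb m j)) (L δ (bb m j)) =
      Osc (e (aa 0 i)) (e (bb 0 j)) (L δ (bb 0 j)) + m := by
    intro m i j
    induction m with
    | zero => rfl
    | succ m ih =>
      have := hT3 (s m) i j
      rw [← hs] at this
      simp only [aa, bb] at ih ⊢
      rw [this, ih]; ring
  have hg : ∀ m i j, ∃ g ∈ L δ (bb m j), (∀ x ∈ L δ (bb m j), x ≤ g) ∧
      e (bb m j) g < e (aa m i) g := by
    intro m i j
    obtain ⟨p, hp⟩ := hs' m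
    have := hT4 p i j
    rw [← hp] at this
    exact this
  have hagree : ∀ m d, (∀ j, L δ (bb m j) ⊆ L δ (bb (m + d) j)) ∧
      ∀ i j, ∀ x ∈ L δ (bb m j), e (aa (m + d) i) x = e (aa m i) x := by
    intro m d
    induction d with
    | zero => exact ⟨fun j => Finset.Subset.refl _, fun i j x hx => rfl⟩
    | succ d ih =>
      have h1 := hT1 (s (m + d))
      have h2 := hT2 (s (m + d))
      rw [← hs] at h1 h2
      refine ⟨fun j => (ih.1 j).trans (h1 j), fun i j x hx => ?_⟩
      have := h2 i j x (ih.1 j hx)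
      exact this.trans (ih.2 i j x hx)
  let U : Finset W := (Finset.range (n + 1) ×ˢ Finset.univ).biUnion fun p : ℕ × κ => L δ (bb p.1 p.2)
  have hU : ∀ m ≤ n, ∀ j, ∀ x ∈ L δ (bb m j), x ∈ U := fun m hm j x hx => by
    simp only [U, Finset.mem_biUnion]
    exact ⟨(m, j), by simp; omega, hx⟩
  have hUδ : ∀ x ∈ U, x < δ := fun x hx => by
    simp only [U, Finset.mem_biUnion] at hx
    obtain ⟨p, -, hx⟩ := hx
    exact L_lt hlim.1 hx
  have haaδ : ∀ m i, δ ≤ aa m i := fun m => (s m).2.2.2.1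
  have hbbδ : ∀ m j, δ ≤ bb m j := fun m => (s m).2.2.2.2
  have hc : ∀ p : Fin (n + 1) × κ, ∃ η < δ, ∀ ξ, η ≤ ξ → ξ < δ → e (bb p.1 p.2) ξ = e δ ξ :=
    fun p => e_coh hlim (hbbδ p.1 p.2)
  choose η hη hη' using hc
  obtain ⟨γa, hγa, hγa'⟩ := hlim.finset U hUδ
  obtain ⟨γb, hγb, hγb'⟩ := hlim.finite η hη
  obtain ⟨ζ, hζ, hζ'⟩ := L_lim hlim (max_lt hγa hγb)
  obtain ⟨ζ1, hζ1, hζζ1⟩ := hlim.2 ζ hζ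
  obtain ⟨v, hv, a, ha, hEa, hav⟩ := hδ.r4 (code U (aa n)) (code_lt hUδ) ζ1 hζ1 (by
    obtain ⟨v, hv1, hv2⟩ := exists_up δ (aa n)
    exact ⟨v, aa n, (s n).2.1, (EX_code _ _ _).2 fun _ _ _ => rfl,
      fun i => ⟨hζ1.le.trans (haaδ n i), hv2 i⟩⟩)
  rw [EX_code] at hEa
  have hai : ∀ i, ζ < a i ∧ a i < δ := fun i => ⟨hζζ1.trans_le (hav i).1, (hav i).2.trans hv⟩
  have hform : ∀ m ≤ n, ∀ i j, osc (a i) (bb m j) =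
      Osc (e (aa 0 i)) (e (bb 0 j)) (L δ (bb 0 j)) + m + Osc (e (a i)) (e δ) (L (a i) δ) := by
    intro m hm i j
    have hpos : ⊥ < a i := lt_of_le_of_lt bot_le (hai i).1
    have hsep : ∀ x ∈ L δ (bb m j), ∀ y ∈ L (a i) δ, x < y := fun x hx y hy =>
      (hγa' x (hU m hm j x hx)).trans_le ((le_max_left _ _).trans (hζ' _ (hai i).1 (hai i).2 y hy))
    have haL : ∀ x ∈ L δ (bb m j), e (a i) x = e (aa m i) x := fun x hx => by
      rw [hEa i x (hU m hm j x hx)]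
      have := (hagree m (n - m)).2 i j x hx
      rwa [Nat.add_sub_cancel' hm] at this
    obtain ⟨g, hg1, hg2, hg3⟩ := hg m i j
    unfold osc
    rw [L_concat hpos (hai i).2 (hbbδ m j) hsep, Finset.union_comm,
      Osc_tail hsep hg1 hg2 (by rw [haL g hg1]; exact hg3), ← hO m i j]
    congr 1
    · exact Osc_congr haL fun _ _ => rfl
    · refine Osc_congr (fun _ _ => rfl) fun x hx => ?_
      exact hη' (⟨m, by omega⟩, j) x ((hγb' _).le.trans
        ((le_max_right _ _).trans (hζ' _ (hai i).1 (hai i).2 x hx)))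
        ((L_lt hpos hx).trans (hai i).2)
  refine ⟨a, ha, bb, fun m => (s m).2.2.1, fun m hm i j => ⟨(hai i).2.trans_le (hbbδ m j), ?_⟩⟩
  rw [hform m hm, hform 0 (Nat.zero_le _)]
  ring

end Moore
open Set

namespace Moore

noncomputable def EE (u : ℝ) : ℂ := Complex.exp (2 * Real.pi * Complex.I * u)

theorem EE_add (u v : ℝ) : EE (u + v) = EE u * EE v := by
  unfold EE
  rw [← Complex.exp_add]
  congr 1
  push_cast
  ring

theorem EE_zero : EE 0 = 1 := by simp [EE]

theorem EE_sum {ι : Type*} (s : Finset ι) (f : ι → ℝ) : EE (∑ i ∈ s, f i) = ∏ i ∈ s, EE (f i) := by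
  classical
  induction s using Finset.induction_on with
  | empty => simp [EE_zero]
  | insert a s h ih => rw [Finset.sum_insert h, Finset.prod_insert h, EE_add, ih]

theorem EE_nat_mul (m : ℕ) (u : ℝ) : EE (m * u) = EE u ^ m := by
  unfold EE
  rw [← Complex.exp_nat_mul]
  congr 1
  push_cast
  ring

theorem norm_EE (u : ℝ) : ‖EE u‖ = 1 := by
  unfold EE
  have : 2 * Real.pi * Complex.I * u = ((2 * Real.pi * u : ℝ) : ℂ) * Complex.I := by
    push_cast; ring
  rw [this, Complex.norm_exp_ofReal_mul_I]

theorem EE_eq_one {u : ℝ} (h : EE u = 1) : ∃ n : ℤ, u = n := by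
  unfold EE at h
  rw [Complex.exp_eq_one_iff] at h
  obtain ⟨n, hn⟩ := h
  refine ⟨n, ?_⟩
  have h2 : (2 * Real.pi * Complex.I : ℂ) ≠ 0 := by
    simp [Real.pi_ne_zero]
  have h3 : (2 * Real.pi * Complex.I : ℂ) * u = (2 * Real.pi * Complex.I : ℂ) * n := by
    rw [hn]; ring
  have := mul_left_cancel₀ h2 h3
  exact_mod_cast this

noncomputable def rr (u : ℝ) : ℝ := 2 + 2 * Real.cos (2 * Real.pi * u)

theorem rr_EE (u : ℝ) : (rr u : ℂ) = EE (-u) * (1 + EE u) ^ 2 := by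
  have h1 : EE (-u) * EE u = 1 := by rw [← EE_add]; simp [EE_zero]
  have h2 : (2 : ℂ) * Complex.cos (2 * Real.pi * u) = EE u + EE (-u) := by
    rw [Complex.two_cos]
    unfold EE
    congr 2 <;> (push_cast; ring)
  have h3 : (rr u : ℂ) = 2 + 2 * Complex.cos (2 * Real.pi * u) := by
    unfold rr; push_cast; ring
  rw [h3, h2]
  linear_combination (-(2 : ℂ) - EE u) * h1

theorem rr_pow (u : ℝ) (p : ℕ) : (rr u : ℂ) ^ p =
    ∑ j ∈ Finset.range (2 * p + 1), ((2 * p).choose j : ℂ) * EE (((j : ℝ) - p) * u) := by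
  rw [rr_EE, mul_pow, ← pow_mul, add_comm (1 : ℂ), add_pow, Finset.mul_sum]
  apply Finset.sum_congr rfl
  intro j _
  have : EE (((j : ℝ) - p) * u) = EE (-u) ^ p * EE u ^ j := by
    rw [← EE_nat_mul, ← EE_nat_mul, ← EE_add]
    congr 1; ring
  rw [this]
  ring

theorem exists_p (k : ℕ) : ∃ p : ℕ, ((4 : ℝ) ^ p) ^ k < 2 ^ p * (Nat.centralBinom p : ℝ) ^ k := by
  have h := tendsto_pow_const_div_const_pow_of_one_lt k (r := (2 : ℝ)) (by norm_num)
  have h2 : ∀ᶠ n : ℕ in Filter.atTop, (n : ℝ) ^ k / 2 ^ n < 1 / 2 ^ k :=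
    h.eventually_lt_const (by positivity)
  obtain ⟨p, hp, hp1⟩ := (h2.and (Filter.eventually_ge_atTop 1)).exists
  refine ⟨p, ?_⟩
  have h3 := Nat.four_pow_le_two_mul_self_mul_centralBinom p (by omega)
  have h4 : (4 : ℝ) ^ p ≤ 2 * p * Nat.centralBinom p := by exact_mod_cast h3
  have hc : (0 : ℝ) < Nat.centralBinom p := by exact_mod_cast Nat.centralBinom_pos p
  calc ((4 : ℝ) ^ p) ^ k ≤ (2 * p * Nat.centralBinom p) ^ k := by gcongr
    _ = (2 ^ k * (p : ℝ) ^ k) * (Nat.centralBinom p : ℝ) ^ k := by rw [mul_pow, mul_pow]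
    _ < 2 ^ p * (Nat.centralBinom p : ℝ) ^ k := by
      apply mul_lt_mul_of_pos_right _ (by positivity)
      rw [div_lt_div_iff₀ (by positivity) (by positivity)] at hp
      linarith

theorem geom_bound {z : ℂ} (hz : z ≠ 1) (h1 : ‖z‖ = 1) (N : ℕ) :
    ‖∑ m ∈ Finset.range N, z ^ m‖ ≤ 2 / ‖z - 1‖ := by
  rw [geom_sum_eq hz, norm_div]
  gcongr
  calc ‖z ^ N - 1‖ ≤ ‖z ^ N‖ + ‖(1 : ℂ)‖ := norm_sub_le _ _
    _ = 2 := by rw [norm_pow, h1]; norm_num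

theorem kronecker {ι : Type*} [Fintype ι] (θ : ι → ℝ)
    (hind : ∀ (c : ι → ℤ) (d : ℤ), ∑ i, (c i : ℝ) * θ i = d → c = 0) :
    ∃ N : ℕ, ∀ φ : ι → ℝ, ∃ m < N, ∀ i, 0 < Real.cos (2 * Real.pi * (m * θ i + φ i)) := by
  classical
  obtain ⟨p, hp⟩ := exists_p (Fintype.card ι)
  let JJ := Fintype.piFinset (fun _ : ι => Finset.range (2 * p + 1))
  let J0 : ι → ℕ := fun _ => p
  have hJ0 : J0 ∈ JJ := by simp [JJ, J0]; omega
  let co : (ι → ℕ) → ℂ := fun J => ∏ i, ((2 * p).choose (J i) : ℂ)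
  let z : (ι → ℕ) → ℂ := fun J => EE (∑ i, ((J i : ℝ) - p) * θ i)
  have hz : ∀ J, J ≠ J0 → z J ≠ 1 := by
    intro J hJ h
    obtain ⟨n, hn⟩ := EE_eq_one h
    have := hind (fun i => (J i : ℤ) - p) n (by rw [← hn]; push_cast; rfl)
    apply hJ
    ext i
    have := congrFun this i
    simp only [Pi.zero_apply] at this
    simp only [J0]
    omega
  let M : ℝ := ∑ J ∈ JJ.erase J0, ‖co J‖ * (2 / ‖z J - 1‖)
  let K := Fintype.card ι
  let c : ℝ := (Nat.centralBinom p : ℝ) ^ K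
  have hexp : ∀ u : ι → ℝ, ((∏ i, rr (u i) ^ p : ℝ) : ℂ) =
      ∑ J ∈ JJ, co J * EE (∑ i, ((J i : ℝ) - p) * u i) := by
    intro u
    push_cast
    simp only [rr_pow]
    rw [Finset.prod_univ_sum]
    apply Finset.sum_congr rfl
    intro J _
    rw [EE_sum, ← Finset.prod_mul_distrib]
  have hbound : ∀ (N : ℕ) (φ : ι → ℝ),
      N * c - M ≤ ∑ m ∈ Finset.range N, ∏ i, rr (m * θ i + φ i) ^ p := by
    intro N φ
    have h1 : ((∑ m ∈ Finset.range N, ∏ i, rr (m * θ i + φ i) ^ p : ℝ) : ℂ) =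
        ∑ J ∈ JJ, co J * EE (∑ i, ((J i : ℝ) - p) * φ i) * ∑ m ∈ Finset.range N, z J ^ m := by
      rw [Complex.ofReal_sum]
      simp only [hexp]
      rw [Finset.sum_comm]
      apply Finset.sum_congr rfl
      intro J _
      rw [Finset.mul_sum]
      apply Finset.sum_congr rfl
      intro m _
      simp only [z]
      rw [← EE_nat_mul, mul_assoc, ← EE_add]
      congr 2
      rw [Finset.mul_sum, ← Finset.sum_add_distrib]
      apply Finset.sum_congr rfl
      intro i _
      ring
    rw [← Finset.add_sum_erase _ _ hJ0] at h1
    have h2 : co J0 * EE (∑ i, ((J0 i : ℝ) - p) * φ i) * ∑ m ∈ Finset.range N, z J0 ^ m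
        = ((N * c : ℝ) : ℂ) := by
      simp only [z, co, J0, sub_self, zero_mul, Finset.sum_const_zero, EE_zero, one_pow, c,
        Finset.prod_const, Finset.sum_const, Finset.card_univ, Finset.card_range, K,
        Nat.centralBinom_eq_two_mul_choose]
      push_cast
      simp
      ring
    rw [h2] at h1
    have h3 : ‖∑ J ∈ JJ.erase J0, co J * EE (∑ i, ((J i : ℝ) - p) * φ i) *
        ∑ m ∈ Finset.range N, z J ^ m‖ ≤ M := by
      refine (norm_sum_le _ _).trans (Finset.sum_le_sum fun J hJ => ?_)
      rw [norm_mul, norm_mul, norm_EE, mul_one]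
      gcongr
      exact geom_bound (hz J (Finset.ne_of_mem_erase hJ)) (norm_EE _) N
    have h4 : ((∑ m ∈ Finset.range N, ∏ i, rr (m * θ i + φ i) ^ p - N * c : ℝ) : ℂ) =
        ∑ J ∈ JJ.erase J0, co J * EE (∑ i, ((J i : ℝ) - p) * φ i) *
        ∑ m ∈ Finset.range N, z J ^ m := by
      rw [Complex.ofReal_sub, h1]; ring
    rw [← h4, Complex.norm_real, Real.norm_eq_abs] at h3
    have := (abs_le.1 h3).1
    linarith
  let q : ℝ := ((4 : ℝ) ^ p) ^ K / 2 ^ p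
  have hq : q < c := by
    simp only [q, c]
    rw [div_lt_iff₀ (by positivity), mul_comm]
    exact hp
  obtain ⟨N, hN⟩ := exists_nat_gt (M / (c - q))
  refine ⟨N, fun φ => ?_⟩
  by_contra! hbad
  have hup : ∑ m ∈ Finset.range N, ∏ i, rr (m * θ i + φ i) ^ p ≤ N * q := by
    have : ∀ m ∈ Finset.range N, ∏ i, rr (m * θ i + φ i) ^ p ≤ q := by
      intro m hm
      obtain ⟨i, hi⟩ := hbad m (Finset.mem_range.1 hm)
      have h0 : ∀ u, 0 ≤ rr u := fun u => by
        unfold rr; linarith [Real.neg_one_le_cos (2 * Real.pi * u)]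
      have h4 : ∀ u, rr u ≤ 4 := fun u => by
        unfold rr; linarith [Real.cos_le_one (2 * Real.pi * u)]
      have h2 : rr (m * θ i + φ i) ≤ 2 := by unfold rr; linarith
      simp only [q]
      rw [le_div_iff₀ (by positivity), ← Finset.mul_prod_erase _ _ (Finset.mem_univ i)]
      have h5 : ∏ x ∈ Finset.univ.erase i, rr (m * θ x + φ x) ^ p ≤
          ∏ x ∈ Finset.univ.erase i, (4 : ℝ) ^ p :=
        Finset.prod_le_prod (fun x _ => pow_nonneg (h0 _) _)
          fun x _ => pow_le_pow_left₀ (h0 _) (h4 _) _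
      have h6 : rr (m * θ i + φ i) ^ p ≤ 2 ^ p := pow_le_pow_left₀ (h0 _) h2 _
      have h7 : ((4 : ℝ) ^ p) ^ K = 4 ^ p * ∏ x ∈ Finset.univ.erase i, (4 : ℝ) ^ p := by
        rw [Finset.mul_prod_erase Finset.univ (fun _ => (4 : ℝ) ^ p) (Finset.mem_univ i)]
        simp [K]
      have h8 : (4 : ℝ) ^ p = 2 ^ p * 2 ^ p := by rw [← mul_pow]; norm_num
      rw [h7]
      calc _ ≤ (2 ^ p * ∏ x ∈ Finset.univ.erase i, (4 : ℝ) ^ p) * 2 ^ p := by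
            gcongr
            exact Finset.prod_nonneg fun x _ => pow_nonneg (h0 _) _
        _ = (2 ^ p * 2 ^ p) * ∏ x ∈ Finset.univ.erase i, (4 : ℝ) ^ p := by ring
        _ = _ := by rw [← h8]
    calc _ ≤ ∑ m ∈ Finset.range N, q := Finset.sum_le_sum this
      _ = N * q := by simp
  have h1 := (hbound N φ).trans hup
  rw [div_lt_iff₀ (by linarith)] at hN
  linarith

/-- The colouring functions. -/
theorem exists_g {W : Type} (hW : Cardinal.mk W ≤ Cardinal.continuum) :
    ∃ g : W → ℕ → Bool, ∀ (a : Finset W) (t : W → Bool), ∃ n : ℕ, ∀ s : W → ℕ, ∃ m ≤ n,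
      ∀ x ∈ a, g x (s x + m) = t x := by
  classical
  let bs := Module.Basis.ofVectorSpace ℚ ℝ
  have hcard : Cardinal.mk (Module.Basis.ofVectorSpaceIndex ℚ ℝ) = Cardinal.continuum := by
    rw [← Real.rank_rat_real, ← bs.mk_eq_rank'']
  have hle : Cardinal.mk (Option W) ≤ Cardinal.mk (Module.Basis.ofVectorSpaceIndex ℚ ℝ) := by
    rw [hcard, Cardinal.mk_option]
    exact Cardinal.add_le_of_le Cardinal.aleph0_le_continuum hW
      (Cardinal.one_le_aleph0.trans Cardinal.aleph0_le_continuum)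
  obtain ⟨f⟩ := hle
  let v : Option W → ℝ := fun x => bs (f x)
  have hv : LinearIndependent ℚ v := bs.linearIndependent.comp f f.injective
  have hv0 : v none ≠ 0 := hv.ne_zero _
  let θ : W → ℝ := fun x => v (some x) / v none
  have hθ : ∀ (a : Finset W) (c : a → ℤ) (d : ℤ), ∑ i, (c i : ℝ) * θ i = d → c = 0 := by
    intro a c d h
    have h1 : ∑ i, (c i : ℝ) * v (some i) = d * v none := by
      rw [← h, Finset.sum_mul]
      apply Finset.sum_congr rfl
      intro i _
      simp only [θ]
      field_simp
    let u : Option a → Option W := Option.map Subtype.val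
    have hu : Function.Injective u := Option.map_injective Subtype.val_injective
    have h2 := hv.comp u hu
    rw [Fintype.linearIndependent_iff] at h2
    have h3 := h2 (fun o => o.elim (-(d : ℚ)) fun i => (c i : ℚ)) (by
      rw [Fintype.sum_option]
      simp only [Option.elim, Function.comp, u, Option.map, Rat.smul_def]
      push_cast
      rw [h1]; ring)
    ext i
    have := h3 (some i)
    simpa using this
  refine ⟨fun x k => decide (0 < Real.cos (2 * Real.pi * (k * θ x))), fun a t => ?_⟩
  obtain ⟨N, hN⟩ := kronecker (fun i : a => θ i) (hθ a)
  refine ⟨N, fun s => ?_⟩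
  obtain ⟨m, hm, h⟩ := hN fun i => s i * θ i + if t i then 0 else 1 / 2
  refine ⟨m, hm.le, fun x hx => ?_⟩
  have h1 := h ⟨x, hx⟩
  simp only at h1
  cases ht : t x
  · rw [ht] at h1
    simp only [Bool.false_eq_true, if_false] at h1
    have : 2 * Real.pi * (m * θ x + (s x * θ x + 1 / 2)) =
      2 * Real.pi * (((s x + m : ℕ) : ℝ) * θ x) + Real.pi := by push_cast; ring
    rw [this, Real.cos_add_pi] at h1
    simp only [decide_eq_false_iff_not, not_lt]
    linarith
  · rw [ht] at h1
    simp only [if_true] at h1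
    have : 2 * Real.pi * (m * θ x + (s x * θ x + 0)) =
      2 * Real.pi * (((s x + m : ℕ) : ℝ) * θ x) := by push_cast; ring
    rw [this] at h1
    simpa using h1

end Moore
open Set

namespace Moore

set_option linter.unusedSectionVars false

variable {W : Type} [LinearOrder W] [OrderBot W] [OmegaOne W]

/-- The key property of the colouring functions. -/
def PK (g : W → ℕ → Bool) : Prop := ∀ (a : Finset W) (t : W → Bool), ∃ n : ℕ, ∀ s : W → ℕ,
  ∃ m ≤ n, ∀ x ∈ a, g x (s x + m) = t x

/-- The colouring. -/
noncomputable def wf (g : W → ℕ → Bool) (β α : W) : Bool :=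
  if α < β then g α (osc α β) else false

theorem wf_ge (g : W → ℕ → Bool) {β α : W} (h : β ≤ α) : wf g β α = false := by
  rw [wf, if_neg (not_lt.2 h)]

theorem main2 {g : W → ℕ → Bool} (hg : PK g) {I J : Type} (a : I → Finset W)
    (tgt flag : I → W → Bool) (b : J → Bool → W)
    (ha : ∀ ζ, ∃ i, ∀ x ∈ a i, ζ ≤ x) (hb : ∀ ζ, ∃ j, ∀ c, ζ ≤ b j c) :
    ∃ i j, (∀ ξ ∈ a i, ∀ c, ξ < b j c) ∧ ∀ ξ ∈ a i, wf g (b j (flag i ξ)) ξ = tgt i ξ := by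
  choose n hn using fun i => hg (a i) (tgt i)
  obtain ⟨⟨k, N⟩, hq⟩ := pigeon (fun i => ((a i).card, n i)) (fun ζ i => ∀ x ∈ a i, ζ ≤ x)
    (fun γ γ' i h h' x hx => h.trans (h' x hx)) ha
  let A : Set (Fin k → W) := {f | ∃ i, n i = N ∧ range f = (a i : Set W)}
  obtain ⟨f, ⟨i, hi, hf⟩, bb, hbb, h⟩ := main_osc A (range b) (by
    intro γ
    obtain ⟨i, hi, h⟩ := hq γ
    simp only [Prod.mk.injEq] at hi
    refine ⟨(a i).orderEmbOfFin hi.1, ⟨i, hi.2, by simp⟩, fun l => h _ ?_⟩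
    exact Finset.orderEmbOfFin_mem _ _ _) (by
    intro γ
    obtain ⟨j, hj⟩ := hb γ
    exact ⟨b j, ⟨j, rfl⟩, hj⟩) N
  obtain ⟨m, hm, h2⟩ := hn i fun ξ => osc ξ (bb 0 (flag i ξ))
  rw [hi] at hm
  obtain ⟨j, hj⟩ := hbb m
  have key : ∀ ξ ∈ a i, ∀ c, ξ < b j c ∧ osc ξ (b j c) = osc ξ (bb 0 c) + m := by
    intro ξ hξ c
    have : ξ ∈ range f := by rw [hf]; exact hξ
    obtain ⟨l, rfl⟩ := this
    rw [hj]
    exact h m hm l c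
  refine ⟨i, j, fun ξ hξ c => (key ξ hξ c).1, fun ξ hξ => ?_⟩
  rw [wf, if_pos (key ξ hξ _).1, (key ξ hξ _).2, h2 ξ hξ]

theorem delta {I : Type} (F : I → Finset W) (h : I → W) (hh : ∀ γ, ∃ i, γ ≤ h i)
    (Q : Finset W → Type) [∀ r, Countable (Q r)] (c : (r : Finset W) → I → Q r) :
    ∃ r, ∃ q : Q r, ∀ γ, ∃ i, γ ≤ h i ∧ c r i = q ∧ r ⊆ F i ∧ ∀ ξ ∈ F i, ξ ∉ r → γ ≤ ξ := by
  classical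
  by_contra! H
  choose G hG using H
  have hb : ∀ r, ∃ γ, ∀ q, G r q < γ := by
    intro r
    obtain ⟨γ, hγ⟩ := bdd_of_countable (countable_range (G r))
    exact ⟨γ, fun q => hγ _ ⟨q, rfl⟩⟩
  obtain ⟨δ, -, hlim, hδ⟩ := reflect (fun w : W => {r : Finset W | ∀ x ∈ r, x ≤ w})
    (fun w => by
      obtain ⟨w', hw⟩ := exists_gt' w
      have h1 : (Iio w').Countable := OmegaOne.ctbl w'
      have h2 := Set.countable_ofPred_finite_subset h1
      have h3 := h2.preimage (f := fun r : Finset W => (r : Set W)) Finset.coe_injective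
      refine h3.mono ?_
      intro r hr
      refine ⟨r.finite_toSet, fun x hx => lt_of_le_of_lt (hr x hx) hw⟩)
    (fun r γ => ∀ q, G r q < γ) ⊥
  obtain ⟨i, hi⟩ := hh δ
  obtain ⟨w, hw, hw2⟩ := hlim.finset ((F i).filter (· < δ)) (by simp)
  obtain ⟨v, hv, hv2⟩ := hδ w hw ((F i).filter (· < δ)) (fun x hx => (hw2 x hx).le) (hb _)
  obtain ⟨ξ, h1, h2, h3⟩ := hG ((F i).filter (· < δ)) (c _ i) i
    (((hv2 _).le.trans hv.le).trans hi) rfl (Finset.filter_subset _ _)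
  have h4 : ξ < δ := h3.trans ((hv2 _).trans hv)
  exact h2 (Finset.mem_filter.2 ⟨h1, h4⟩)

theorem unb_pair {T : Type} {β γ : T → W} (hβ : Function.Injective β) (hγ : Function.Injective γ)
    {S : Set T} (hS : ¬ S.Countable) (ζ : W) : ∃ y : S, ζ ≤ β y ∧ ζ ≤ γ y := by
  by_contra! h
  apply hS
  refine (((OmegaOne.ctbl ζ).preimage hβ).union ((OmegaOne.ctbl ζ).preimage hγ)).mono ?_
  intro y hy
  by_cases h1 : ζ ≤ β y
  · exact Or.inr (h ⟨y, hy⟩ h1)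
  · exact Or.inl (not_le.1 h1)

theorem unb_set {D : Set W} (hD : ¬ D.Countable) (ζ : W) : ∃ y : D, ζ ≤ y :=
  (unb_pair Function.injective_id Function.injective_id hD ζ).imp fun _ h => h.1

theorem claim0 {g : W → ℕ → Bool} (hg : PK g) {D : Set W} (hD : ¬ D.Countable) (β0 : W) :
    {β | ∀ α ∈ D, wf g β α = wf g β0 α}.Countable := by
  by_contra H
  let I := {α : D // β0 ≤ α}
  obtain ⟨i, j, h1, h2⟩ := main2 hg (fun i : I => {i.1.1}) (fun _ _ => true) (fun _ _ => true)
    (fun (j : {β | ∀ α ∈ D, wf g β α = wf g β0 α}) _ => j.1) (by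
      intro ζ
      obtain ⟨y, hy⟩ := unb_set hD (max ζ β0)
      refine ⟨⟨y, (le_max_right _ _).trans hy⟩, ?_⟩
      simpa using (le_max_left _ _).trans hy) (by
      intro ζ
      obtain ⟨y, hy⟩ := unb_set H ζ
      exact ⟨y, fun _ => hy⟩)
  have h3 := h2 _ (Finset.mem_singleton_self _)
  rw [j.2 _ i.1.2, wf_ge g i.2] at h3
  simp at h3

theorem claim1 {g : W → ℕ → Bool} (hg : PK g) {T : Type} (hT : ¬ (univ : Set T).Countable)
    {β : T → W} (hβ : Function.Injective β) : ∃ y0 : T, ∀ F : Finset W,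
      ¬ {y | ∀ α ∈ F, wf g (β y) α = wf g (β y0) α}.Countable := by
  classical
  by_contra! H
  choose F hF using H
  have hζ : ∀ y, ∃ ζ, ∀ y', (∀ α ∈ F y, wf g (β y') α = wf g (β y) α) → β y' < ζ := by
    intro y
    obtain ⟨ζ, hζ⟩ := bdd_of_countable ((hF y).image β)
    exact ⟨ζ, fun y' h => hζ _ ⟨y', h, rfl⟩⟩
  choose Z hZ using hζ
  obtain ⟨r, q, h⟩ := delta F β (fun γ => by
    obtain ⟨y, hy⟩ := unb_pair hβ hβ hT γ
    exact ⟨y, hy.1⟩) (fun r => (r → Bool)) (fun r y α => wf g (β y) α)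
  let J := {y : T // (fun α : r => wf g (β y) α) = q}
  obtain ⟨i, j, h1, h2⟩ := main2 hg (fun i : J => insert (Z i.1) (F i.1 \ r))
    (fun i ξ => wf g (β i.1) ξ) (fun _ _ => true) (fun (j : J) _ => β j.1) (by
      intro ζ
      obtain ⟨y, hy, hc, hr, hy2⟩ := h ζ
      refine ⟨⟨y, hc⟩, fun x hx => ?_⟩
      rw [Finset.mem_insert, Finset.mem_sdiff] at hx
      rcases hx with rfl | hx
      · exact hy.trans (hZ y y fun _ _ => rfl).le
      · exact hy2 x hx.1 hx.2) (by
      intro ζ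
      obtain ⟨y, hy, hc, -⟩ := h ζ
      exact ⟨⟨y, hc⟩, fun _ => hy⟩)
  have h3 := h1 _ (Finset.mem_insert_self _ _) true
  refine lt_asymm h3 (hZ i.1 j.1 fun α hα => ?_)
  by_cases hr : α ∈ r
  · have := congrFun (i.2.trans j.2.symm) ⟨α, hr⟩
    exact this.symm
  · exact h2 α (Finset.mem_insert_of_mem (Finset.mem_sdiff.2 ⟨hα, hr⟩))

theorem claim2 {g : W → ℕ → Bool} (hg : PK g) {T : Type} (hT : ¬ (univ : Set T).Countable)
    {β γ : T → W} (hβ : Function.Injective β) (hγ : Function.Injective γ)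
    {A D : Set W} (hD : ¬ D.Countable) (hAD : ∀ x ∈ D, x ∉ A)
    (hc : ∀ y0, ∀ α ∈ D, ∃ F : Finset W, (∀ ξ ∈ F, ξ ∈ A) ∧
      ∀ y, (∀ ξ ∈ F, wf g (β y) ξ = wf g (β y0) ξ) → wf g (γ y) α = wf g (γ y0) α) : False := by
  classical
  obtain ⟨y0, hy0⟩ := claim1 hg hT hβ
  choose F hFA hF using fun α : D => hc y0 α.1 α.2
  obtain ⟨r, _q, h⟩ := delta F (fun α : D => α.1) (unb_set hD) (fun _ => Unit) (fun _ _ => ())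
  let I := {α : D // max (β y0) (γ y0) ≤ α ∧ ∀ ξ ∈ F α, ξ ∉ r → max (β y0) (γ y0) ≤ ξ}
  obtain ⟨i, j, h1, h2⟩ := main2 hg (fun i : I => insert i.1.1 (F i.1 \ r))
    (fun i ξ => decide (ξ = i.1.1)) (fun i ξ => decide (ξ = i.1.1))
    (fun (j : {y | ∀ α ∈ r, wf g (β y) α = wf g (β y0) α}) c => if c then γ j.1 else β j.1) (by
      intro ζ
      obtain ⟨α, hα, -, hr, hy2⟩ := h (max ζ (max (β y0) (γ y0)))
      refine ⟨⟨α, (le_max_right _ _).trans hα,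
        fun ξ h1 h2 => (le_max_right _ _).trans (hy2 ξ h1 h2)⟩, fun x hx => ?_⟩
      rw [Finset.mem_insert, Finset.mem_sdiff] at hx
      rcases hx with rfl | hx
      · exact (le_max_left _ _).trans hα
      · exact (le_max_left _ _).trans (hy2 x hx.1 hx.2)) (by
      intro ζ
      obtain ⟨y, hy, hy2⟩ := unb_pair hβ hγ (hy0 r) ζ
      refine ⟨y, fun c => ?_⟩
      cases c
      · simpa using hy
      · simpa using hy2)
  have h3 := h2 _ (Finset.mem_insert_self _ _)
  simp only [decide_true, if_true] at h3
  have h4 := hF i.1 j.1 (by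
    intro ξ hξ
    by_cases hr : ξ ∈ r
    · exact j.2 ξ hr
    · have h5 := h2 ξ (Finset.mem_insert_of_mem (Finset.mem_sdiff.2 ⟨hξ, hr⟩))
      have h6 : ξ ≠ i.1.1 := by
        rintro rfl
        exact hAD _ i.1.2 (hFA _ _ hξ)
      simp only [h6, decide_false, Bool.false_eq_true, if_false] at h5
      rw [h5, wf_ge g ((le_max_left _ _).trans (i.2.2 ξ hξ hr))])
  rw [h3, wf_ge g ((le_max_right _ _).trans i.2.1)] at h4
  simp at h4

end Moore
open Set

namespace Moore

set_option linter.unusedSectionVars false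

variable {W : Type} [LinearOrder W] [OrderBot W] [OmegaOne W]

/-- The spaces. -/
def Sp (g : W → ℕ → Bool) (A : Set W) : Set (A → Bool) := range fun (β : W) (α : A) => wf g β α

theorem sp_card {g : W → ℕ → Bool} (hg : PK g) {A : Set W} (hA : ¬ A.Countable)
    (hW : Cardinal.mk W = Cardinal.aleph 1) : Cardinal.mk (Sp g A) = Cardinal.aleph 1 := by
  apply le_antisymm
  · rw [← hW]
    exact Cardinal.mk_range_le
  · rw [Cardinal.aleph_one_le_iff]
    by_contra h
    rw [not_lt, Cardinal.le_aleph0_iff_set_countable] at h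
    have h1 : (⋃ y ∈ Sp g A, {β : W | (fun α : A => wf g β α) = y}).Countable := by
      refine h.biUnion ?_
      rintro y ⟨β0, rfl⟩
      refine (claim0 hg hA β0).mono ?_
      intro β hβ α hα
      exact congrFun hβ ⟨α, hα⟩
    have h2 : (univ : Set W).Countable := by
      refine h1.mono fun β _ => ?_
      simp only [mem_iUnion]
      exact ⟨_, ⟨β, rfl⟩, rfl⟩
    have := (OmegaOne.unc : Uncountable W)
    exact not_countable_univ h2

theorem incompat {g : W → ℕ → Bool} (hg : PK g) {A B : Set W} (hB : ¬ B.Countable)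
    (hAB : (A ∩ B).Countable) (S : Set (Sp g A)) (S' : Set (Sp g B)) (hS : ¬ S.Countable)
    (h : S ≃ₜ S') : False := by
  classical
  have e1 : ∀ y : S, ∃ β : W, ∀ α : A, wf g β α = y.1.1 α := fun y => by
    obtain ⟨β, hβ⟩ := y.1.2
    exact ⟨β, fun α => congrFun hβ α⟩
  have e2 : ∀ y : S', ∃ β : W, ∀ α : B, wf g β α = y.1.1 α := fun y => by
    obtain ⟨β, hβ⟩ := y.1.2
    exact ⟨β, fun α => congrFun hβ α⟩
  choose β hβ using e1
  choose γ hγ using e2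
  have hD : ¬ (B \ A).Countable := by
    intro h
    apply hB
    refine (h.union hAB).mono ?_
    intro x hx
    by_cases hxA : x ∈ A
    · exact Or.inr ⟨hxA, hx⟩
    · exact Or.inl ⟨hx, hxA⟩
  refine claim2 hg (T := S) (β := β) (γ := γ ∘ h) (A := A) (D := B \ A) ?_ ?_ ?_ hD
    (fun x hx => hx.2) ?_
  · rwa [countable_univ_iff]
  · intro y y' hy
    apply Subtype.ext; apply Subtype.ext; funext α
    rw [← hβ, ← hβ, hy]
  · have : Function.Injective γ := by
      intro y y' hy
      apply Subtype.ext; apply Subtype.ext; funext α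
      rw [← hγ, ← hγ, hy]
    exact this.comp h.injective
  · intro y0 α hα
    have hcont : Continuous fun y : S => (h y).1.1 ⟨α, hα.1⟩ :=
      (continuous_apply _).comp (continuous_subtype_val.comp
        (continuous_subtype_val.comp h.continuous))
    have hop : IsOpen {y : S | (h y).1.1 ⟨α, hα.1⟩ = (h y0).1.1 ⟨α, hα.1⟩} :=
      (isOpen_discrete {(h y0).1.1 ⟨α, hα.1⟩}).preimage hcont
    obtain ⟨V, hV, hV2⟩ := isOpen_induced_iff.1 hop
    obtain ⟨U, hU, hU2⟩ := isOpen_induced_iff.1 hV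
    have hmem : y0.1.1 ∈ U := by
      have h1 : y0 ∈ {y : S | (h y).1.1 ⟨α, hα.1⟩ = (h y0).1.1 ⟨α, hα.1⟩} := rfl
      rw [← hV2, ← hU2] at h1
      exact h1
    obtain ⟨F, u, h1, h2⟩ := isOpen_pi_iff.1 hU _ hmem
    refine ⟨F.map (Function.Embedding.subtype _), ?_, ?_⟩
    · intro ξ hξ
      obtain ⟨x, _, rfl⟩ := Finset.mem_map.1 hξ
      exact x.2
    · intro y hy
      have h3 : y.1.1 ∈ U := by
        apply h2
        intro x hx
        have := hy x (Finset.mem_map.2 ⟨x, hx, rfl⟩)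
        rw [hβ, hβ] at this
        rw [this]
        exact (h1 x hx).2
      have h4 : y ∈ {y : S | (h y).1.1 ⟨α, hα.1⟩ = (h y0).1.1 ⟨α, hα.1⟩} := by
        rw [← hV2, ← hU2]
        exact h3
      have h5 := hγ (h y) ⟨α, hα.1⟩
      have h6 := hγ (h y0) ⟨α, hα.1⟩
      simp only [Function.comp]
      rw [h5, h6]
      exact h4

theorem exists_ad (hW : Cardinal.mk W = Cardinal.aleph 1) : ∃ P : Set (W → W),
    P.Pairwise (fun f f' => {α | f α = f' α}.Countable) ∧ Cardinal.aleph 2 ≤ Cardinal.mk P := by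
  obtain ⟨P, hP⟩ := zorn_subset
    {P : Set (W → W) | P.Pairwise (fun f f' => {α | f α = f' α}.Countable)} (by
      intro c hc hch
      refine ⟨⋃₀ c, ?_, fun s hs => subset_sUnion_of_mem hs⟩
      exact (pairwise_sUnion hch.directedOn).2 fun s hs => hc hs)
  refine ⟨P, hP.prop, ?_⟩
  by_contra H
  have h2 : (Cardinal.aleph 2) = Order.succ (Cardinal.aleph 1) := by
    rw [Cardinal.succ_aleph, one_add_one_eq_two]
  rw [h2, Order.succ_le_iff, not_lt, ← hW] at H
  obtain ⟨e⟩ := H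
  have hne : ∀ α, ∃ v : W, ∀ f : P, e f ≤ α → f.1 α ≠ v := by
    intro α
    obtain ⟨α', hα⟩ := exists_gt' α
    have h1 : {f : P | e f ≤ α}.Countable :=
      ((OmegaOne.ctbl α').preimage e.injective).mono fun f hf => lt_of_le_of_lt hf hα
    obtain ⟨v, hv⟩ := bdd_of_countable (h1.image fun f => f.1 α)
    exact ⟨v, fun f hf => (hv _ ⟨f, hf, rfl⟩).ne⟩
  choose d hd using hne
  have hdP : d ∉ P := fun h => hd (e ⟨d, h⟩) ⟨d, h⟩ le_rfl rfl
  have hct : ∀ f ∈ P, {α | f α = d α}.Countable := by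
    intro f hf
    refine (OmegaOne.ctbl (e ⟨f, hf⟩)).mono ?_
    intro α hα
    by_contra h
    exact hd α ⟨f, hf⟩ (not_lt.1 h) hα
  have h3 : (insert d P).Pairwise (fun f f' => {α | f α = f' α}.Countable) := by
    refine hP.prop.insert fun f hf _ => ⟨?_, hct f hf⟩
    refine (hct f hf).mono fun α hα => ?_
    exact Eq.symm hα
  exact hdP (hP.le_of_ge h3 (subset_insert _ _) (mem_insert _ _))

theorem exists_adW (hW : Cardinal.mk W = Cardinal.aleph 1) : ∃ (P : Type) (A : P → Set W),
    Cardinal.aleph 2 ≤ Cardinal.mk P ∧ (∀ p, ¬ (A p).Countable) ∧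
    ∀ p q, p ≠ q → (A p ∩ A q).Countable := by
  obtain ⟨P, hP, hc⟩ := exists_ad hW
  have : Uncountable W := OmegaOne.unc
  obtain ⟨e⟩ : Nonempty (W × W ≃ W) := by
    apply Cardinal.eq.1
    rw [Cardinal.mk_prod, Cardinal.lift_id, Cardinal.mul_mk_eq_max, max_self]
  refine ⟨P, fun p => range fun α => e (α, p.1 α), hc, ?_, ?_⟩
  · intro p h
    have hi : Function.Injective fun α => e (α, p.1 α) := by
      intro x y hxy
      exact congrArg Prod.fst (e.injective hxy)
    have h2 := h.preimage hi
    rw [preimage_range] at h2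
    exact not_countable_univ h2
  · intro p q hpq
    have h1 := hP p.2 q.2 fun h => hpq (Subtype.ext h)
    refine (h1.image fun α => e (α, p.1 α)).mono ?_
    rintro _ ⟨⟨x, rfl⟩, ⟨y, hy⟩⟩
    have h2 := e.injective hy
    simp only [Prod.mk.injEq] at h2
    obtain ⟨rfl, h2⟩ := h2
    exact ⟨y, h2.symm, rfl⟩

theorem final (hW : Cardinal.mk W = Cardinal.aleph 1) (B : Set (Σ Y : Type, TopologicalSpace Y))
    (hbasis : ∀ (Y : Type) (tY : TopologicalSpace Y),
      @T2Space Y tY → @RegularSpace Y tY → Cardinal.mk Y = Cardinal.aleph 1 →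
      ∃ S : Set Y, ¬ S.Countable ∧ ∃ b ∈ B,
        Nonempty (@Homeomorph S b.1 (TopologicalSpace.induced Subtype.val tY) b.2)) :
    Cardinal.aleph 2 ≤ Cardinal.mk B := by
  obtain ⟨g, hg⟩ := exists_g (W := W) (hW.trans_le Cardinal.aleph_one_le_continuum)
  obtain ⟨P, A, hP, hA, hAA⟩ := exists_adW hW
  have key := fun p : P => hbasis (Sp g (A p)) inferInstance inferInstance inferInstance
    (sp_card hg (hA p) hW)
  choose S hS b hb hom using key
  have hinj : Function.Injective fun p : P => (⟨b p, hb p⟩ : B) := by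
    intro p q hpq
    by_contra hne
    have h1 : b p = b q := congrArg Subtype.val hpq
    obtain ⟨f1⟩ := hom p
    obtain ⟨f2⟩ := hom q
    rw [← h1] at f2
    letI := (b p).2
    exact incompat hg (hA q) (hAA p q hne) (S p) (S q) (hS p) (f1.trans f2.symm)
  have h2 := Cardinal.mk_le_of_injective (Function.Injective.comp hinj ULift.down_injective)
  rw [Cardinal.mk_uLift] at h2
  refine le_trans ?_ h2
  have h3 := Cardinal.lift_le.{1}.2 hP
  rw [Cardinal.lift_aleph] at h3
  simpa using h3

end Moore

end MooreProof

/-- **Theorem (Moore).** If `ℬ` is a family of topological spaces such that every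
uncountable regular Hausdorff topological space of cardinality `ℵ₁` has an
uncountable subspace homeomorphic to a member of `ℬ`, then `ℬ` has cardinality at
least `ℵ₂`.  In particular, any basis (with respect to taking uncountable
subspaces) for the uncountable regular Hausdorff spaces has cardinality strictly
greater than `ℵ₁`. -/
theorem statement3 (B : Set (Σ Y : Type, TopologicalSpace Y))
    (hbasis : ∀ (Y : Type) (tY : TopologicalSpace Y),
      @T2Space Y tY → @RegularSpace Y tY → Cardinal.mk Y = Cardinal.aleph 1 →
      ∃ S : Set Y, ¬ S.Countable ∧ ∃ b ∈ B,
        Nonempty (@Homeomorph S b.1 (TopologicalSpace.induced Subtype.val tY) b.2)) :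
    Cardinal.aleph 2 ≤ Cardinal.mk B := by
  have hc : Cardinal.mk (Cardinal.aleph 1 : Cardinal.{0}).ord.ToType = Cardinal.aleph 1 :=
    Cardinal.mk_ord_toType _
  have hunc : Uncountable (Cardinal.aleph 1 : Cardinal.{0}).ord.ToType := by
    rw [← Cardinal.aleph0_lt_mk_iff, hc, ← Cardinal.aleph_one_le_iff]
  haveI : Nonempty (Cardinal.aleph 1 : Cardinal.{0}).ord.ToType := inferInstance
  letI : OrderBot (Cardinal.aleph 1 : Cardinal.{0}).ord.ToType := WellFoundedLT.toOrderBot _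
  haveI : OmegaOne (Cardinal.aleph 1 : Cardinal.{0}).ord.ToType :=
    { wf := inferInstance
      unc := hunc
      ctbl := fun w => by
        rw [Cardinal.countable_iff_lt_aleph_one]
        exact Cardinal.mk_Iio_toType_ord_lt w }
  exact Moore.final hc B hbasis
end

section
/- Let ⟨C_α : α < ω₁⟩ be a C-sequence with associated lower trace L and maximal weight functions e_β(·) = ρ₁(·,β), and for α < β set osc(α,β) = |Osc(e_α, e_β; L(α,β))|. Then for all uncountable A, B ⊆ ω₁ and every n < ω there exist α ∈ A and β ∈ B with α < β and *(osc(α,β)) = n. In particular osc* witnesses ω₁ ↛ [ω₁;ω₁]²_ω. -/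
/-- The first uncountable ordinal. -/
noncomputable def omega1 : Ordinal := (Cardinal.aleph 1).ord

/-- `OscSet s t F` is the set of all `ξ ∈ F` which have an immediate predecessor
`ξ⁻` in `F` with `s ξ⁻ ≤ t ξ⁻` and `s ξ > t ξ`. -/
def OscSet (s t : Ordinal → ℕ) (F : Set Ordinal) : Set Ordinal :=
  {ξ | ξ ∈ F ∧ ∃ η ∈ F, η < ξ ∧ (∀ ζ ∈ F, ζ < ξ → ζ ≤ η) ∧ s η ≤ t η ∧ t ξ < s ξ}

/-- The function `* : ω → ω`: `*(0) = 0` and, for `m > 0`, `*(m) = n` where the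
`n`-th prime (with `p₀ = 2`, `p₁ = 3`, …) is the least prime not dividing `m`. -/
noncomputable def starFn (m : ℕ) : ℕ :=
  if m = 0 then 0 else Nat.count Nat.Prime (sInf {p | Nat.Prime p ∧ ¬ p ∣ m})

universe u

open Set

theorem om_countable_Iio {γ : Ordinal.{u}} (h : γ < omega1) : (Iio γ).Countable := by
  rw [← Cardinal.le_aleph0_iff_set_countable, Cardinal.mk_Iio_ordinal]
  have h1 : γ.card < Cardinal.aleph 1 := Cardinal.lt_ord.1 h
  have h2 : γ.card ≤ Cardinal.aleph0 := by
    rw [← Cardinal.succ_aleph0] at h1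
    exact Order.lt_succ_iff.1 h1
  rw [← Cardinal.lift_aleph0.{u+1, u}]
  exact Cardinal.lift_le.2 h2

theorem om_pos : (0 : Ordinal.{u}) < omega1 := by
  unfold omega1
  rw [Cardinal.lt_ord]
  simp

theorem om_succ {γ : Ordinal.{u}} (h : γ < omega1) : Order.succ γ < omega1 :=
  (Cardinal.isSuccLimit_ord (Cardinal.aleph0_le_aleph 1)).succ_lt h

theorem om_bdd {S : Set Ordinal.{u}} (hS : S.Countable) (h : ∀ x ∈ S, x < omega1) :
    ∃ γ < omega1, ∀ x ∈ S, x < γ := by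
  have : Countable S := hS
  have h1 : (⨆ i : S, (i : Ordinal)) < omega1 := by
    have := Ordinal.iSup_lt_omega_one (α := S) (f := fun i => (i : Ordinal))
      (fun i => by have := h i i.2; simpa [omega1] using this)
    simpa [omega1] using this
  refine ⟨_, om_succ h1, fun x hx => ?_⟩
  rw [Order.lt_succ_iff]
  have hb : BddAbove (range fun i : S => (i : Ordinal)) :=
    ⟨omega1, by rintro _ ⟨i, rfl⟩; exact (h i i.2).le⟩
  exact le_ciSup hb ⟨x, hx⟩

theorem om_unb {S : Set Ordinal.{u}} (hS : ¬ S.Countable) {γ : Ordinal.{u}}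
    (hγ : γ < omega1) : ∃ x ∈ S, γ < x := by
  by_contra! hcon
  exact hS ((om_countable_Iio (om_succ hγ)).mono fun x hx => Order.lt_succ_iff.2 (hcon x hx))

theorem om_lt_max {a b : Ordinal.{u}} (h : a < omega1) (h' : b < omega1) : max a b < omega1 :=
  max_lt h h'

/-- A countable-parameter reflection principle. -/
theorem om_reflect (P : Ordinal.{u} → Set (Set Ordinal.{u})) (hP : ∀ γ < omega1, (P γ).Countable)
    (hmono : ∀ γ γ' S, γ ≤ γ' → S ∈ P γ → S ∈ P γ') :
    ∃ δ < omega1, 0 < δ ∧ (∀ γ < δ, Order.succ γ < δ) ∧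
      ∀ γ < δ, ∀ S ∈ P γ, S ⊆ Iio omega1 → S.Countable → ∀ x ∈ S, x < δ := by
  have step : ∀ γ : Ordinal.{u}, ∃ γ', γ < omega1 → γ' < omega1 ∧ γ < γ' ∧
      ∀ S ∈ P γ, S ⊆ Iio omega1 → S.Countable → ∀ x ∈ S, x < γ' := by
    intro γ
    by_cases hγ : γ < omega1
    swap
    · exact ⟨0, fun h => absurd h hγ⟩
    have hc : (⋃ S ∈ {S ∈ P γ | S ⊆ Iio omega1 ∧ S.Countable}, S).Countable := by
      apply Set.Countable.biUnion
      · exact (hP γ hγ).mono (sep_subset _ _)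
      · intro S hS; exact hS.2.2
    obtain ⟨γ', h1, h2⟩ := om_bdd hc (by
      intro x hx
      simp only [mem_iUnion] at hx
      obtain ⟨S, hS, hx⟩ := hx
      exact hS.2.1 hx)
    refine ⟨max γ' (Order.succ γ), fun _ => ⟨max_lt h1 (om_succ hγ), ?_, ?_⟩⟩
    · exact (Order.lt_succ γ).trans_le (le_max_right _ _)
    · intro S hS ho hSc x hx
      refine (h2 x ?_).trans_le (le_max_left _ _)
      simp only [mem_iUnion]
      exact ⟨S, ⟨hS, ho, hSc⟩, hx⟩
  choose g hg using step
  let d : ℕ → Ordinal.{u} := fun n => g^[n] 0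
  have hd : ∀ n, d (n+1) = g (d n) := fun n => Function.iterate_succ_apply' g n 0
  have hdo : ∀ n, d n < omega1 := by
    intro n
    induction n with
    | zero => exact om_pos
    | succ n ih => rw [hd]; exact (hg _ ih).1
  have hlt : ∀ n, d n < d (n+1) := fun n => by rw [hd]; exact (hg _ (hdo n)).2.1
  have hb : BddAbove (range d) := ⟨omega1, by rintro _ ⟨i, rfl⟩; exact (hdo i).le⟩
  have hle : ∀ n, d n < ⨆ n, d n := fun n => (hlt n).trans_le (le_ciSup hb (n+1))
  have hex : ∀ γ < ⨆ n, d n, ∃ n, γ < d n := fun γ hγ => exists_lt_of_lt_ciSup hγ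
  refine ⟨⨆ n, d n, ?_, ?_, ?_, ?_⟩
  · have := Ordinal.iSup_lt_omega_one (f := d) (fun i => by
      have := hdo i; simpa [omega1] using this)
    simpa [omega1] using this
  · exact hle 0
  · intro γ hγ
    obtain ⟨n, hn⟩ := hex γ hγ
    exact (Order.succ_le_of_lt hn).trans_lt (hle n)
  · intro γ hγ S hS ho hSc x hx
    obtain ⟨n, hn⟩ := hex γ hγ
    have := (hg _ (hdo n)).2.2 S (hmono _ _ _ hn.le hS) ho hSc x hx
    rw [← hd] at this
    exact this.trans (hle _)

structure CSeq (C : Ordinal.{u} → Set Ordinal.{u}) (L : Ordinal.{u} → Ordinal.{u} → Set Ordinal.{u})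
    (ρ : Ordinal.{u} → Ordinal.{u} → ℕ) : Prop where
  hC : ∀ β : Ordinal.{u}, 0 < β → β < omega1 →
      C β ⊆ Set.Iio β ∧ (0 : Ordinal) ∈ C β ∧
      (∀ γ < β, ∃ x ∈ C β, γ ≤ x) ∧ (∀ γ < β, (C β ∩ Set.Iio γ).Finite)
  hL0 : ∀ α : Ordinal.{u}, L α α = ∅
  hLrec : ∀ α β : Ordinal.{u}, 0 < α → α < β → β < omega1 →
      L α β = insert (sSup (C β ∩ Set.Iio α))
        {ξ ∈ L α (sInf (C β \ Set.Iio α)) | sSup (C β ∩ Set.Iio α) < ξ}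
  hρ0 : ∀ α : Ordinal.{u}, ρ α α = 0
  hρrec : ∀ α β : Ordinal.{u}, α < β → β < omega1 →
      ρ α β = max (C β ∩ Set.Iio α).ncard (ρ α (sInf (C β \ Set.Iio α)))

namespace CSeq

variable {C : Ordinal.{u} → Set Ordinal.{u}} {L : Ordinal.{u} → Ordinal.{u} → Set Ordinal.{u}}
    {ρ : Ordinal.{u} → Ordinal.{u} → ℕ}

theorem pos_of_lt {α β : Ordinal.{u}} (h : α < β) : 0 < β := (zero_le).trans_lt h

theorem inf_mem (H : CSeq C L ρ) {α β : Ordinal.{u}} (h : α < β) (hβ : β < omega1) :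
    sInf (C β \ Iio α) ∈ C β ∧ α ≤ sInf (C β \ Iio α) ∧ sInf (C β \ Iio α) < β := by
  obtain ⟨h1, -, h2, -⟩ := H.hC β (pos_of_lt h) hβ
  obtain ⟨x, hx, hx'⟩ := h2 α h
  have : sInf (C β \ Iio α) ∈ C β \ Iio α := csInf_mem ⟨x, hx, not_lt.2 hx'⟩
  exact ⟨this.1, not_lt.1 this.2, h1 this.1⟩

theorem fin (H : CSeq C L ρ) {α β : Ordinal.{u}} (h : α < β) (hβ : β < omega1) :
    (C β ∩ Iio α).Finite := (H.hC β (pos_of_lt h) hβ).2.2.2 α h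

theorem sup_mem (H : CSeq C L ρ) {α β : Ordinal.{u}} (h0 : 0 < α) (h : α < β) (hβ : β < omega1) :
    sSup (C β ∩ Iio α) ∈ C β ∩ Iio α :=
  Set.Nonempty.csSup_mem ⟨0, (H.hC β (pos_of_lt h) hβ).2.1, h0⟩ (H.fin h hβ)

theorem le_sup (H : CSeq C L ρ) {α β x : Ordinal.{u}} (h : α < β) (hβ : β < omega1)
    (hx : x ∈ C β) (hx' : x < α) : x ≤ sSup (C β ∩ Iio α) :=
  le_csSup (H.fin h hβ).bddAbove ⟨hx, hx'⟩

theorem fin_one (H : CSeq C L ρ) (n : ℕ) (β : Ordinal.{u}) :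
    β < omega1 → {ξ | ξ < β ∧ ρ ξ β ≤ n}.Finite := by
  induction β using WellFoundedLT.induction with
  | ind β ih =>
  intro hβ
  rcases eq_or_ne β 0 with rfl | h0
  · convert Set.finite_empty
    ext x; simp
  have hpos : 0 < β := pos_iff_ne_zero.2 h0
  have hK : {η | η ∈ C β ∧ (C β ∩ Iio η).ncard ≤ n}.Finite := by
    apply Set.Finite.of_finite_image (f := fun η => (C β ∩ Iio η).ncard)
    · apply (Set.finite_Iic n).subset
      rintro _ ⟨η, hη, rfl⟩
      exact hη.2
    · have key : ∀ x ∈ C β, ∀ y ∈ C β, x < y →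
          (C β ∩ Iio x).ncard < (C β ∩ Iio y).ncard := by
        intro x hx y hy hxy
        apply Set.ncard_lt_ncard _ (H.fin ((H.hC β hpos hβ).1 hy) hβ)
        refine ⟨fun z hz => ⟨hz.1, lt_trans hz.2 hxy⟩, fun hh => ?_⟩
        exact lt_irrefl x (mem_Iio.1 (hh ⟨hx, hxy⟩).2)
      intro x hx y hy hxy
      simp only at hxy
      rcases lt_trichotomy x y with h | h | h
      · have := key x hx.1 y hy.1 h; omega
      · exact h
      · have := key y hy.1 x hx.1 h; omega
  have : {ξ | ξ < β ∧ ρ ξ β ≤ n} ⊆ ⋃ η ∈ {η | η ∈ C β ∧ (C β ∩ Iio η).ncard ≤ n},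
      insert η {ξ | ξ < η ∧ ρ ξ η ≤ n} := by
    rintro ξ ⟨hξ, hr⟩
    obtain ⟨h1, h2, h3⟩ := H.inf_mem hξ hβ
    rw [H.hρrec ξ β hξ hβ] at hr
    simp only [mem_iUnion]
    refine ⟨sInf (C β \ Iio ξ), ⟨h1, ?_⟩, ?_⟩
    · have : C β ∩ Iio (sInf (C β \ Iio ξ)) = C β ∩ Iio ξ := by
        ext z
        simp only [mem_inter_iff, mem_Iio, and_congr_right_iff]
        intro hz
        refine ⟨fun h => ?_, fun h => h.trans_le h2⟩
        by_contra hcon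
        exact notMem_of_lt_csInf h (OrderBot.bddBelow _) ⟨hz, hcon⟩
      rw [this]
      exact (le_max_left _ _).trans hr
    · rcases h2.eq_or_lt with h | h
      · left; exact h
      · right; exact ⟨h, (le_max_right _ _).trans hr⟩
  refine (hK.biUnion fun η hη => ?_).subset this
  have := (H.hC β hpos hβ).1 hη.1
  exact (ih η this (lt_trans this hβ)).insert _

theorem inter_eq (H : CSeq C L ρ) {ξ γ β : Ordinal.{u}} (hγ : γ < β) (hβ : β < omega1)
    (h1 : sSup (C β ∩ Iio γ) < ξ) (h2 : ξ ≤ γ) : C β ∩ Iio ξ = C β ∩ Iio γ := by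
  ext z
  simp only [mem_inter_iff, mem_Iio, and_congr_right_iff]
  intro hz
  exact ⟨fun h => h.trans_le h2, fun h => (H.le_sup hγ hβ hz h).trans_lt h1⟩

theorem diff_eq (H : CSeq C L ρ) {ξ γ β : Ordinal.{u}} (hγ : γ < β) (hβ : β < omega1)
    (h1 : sSup (C β ∩ Iio γ) < ξ) (h2 : ξ ≤ γ) : C β \ Iio ξ = C β \ Iio γ := by
  rw [← sdiff_self_inter, H.inter_eq hγ hβ h1 h2, sdiff_self_inter]

theorem coh' (H : CSeq C L ρ) (γ : Ordinal.{u}) :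
    ∀ β < omega1, γ ≤ β → {ξ | ξ < γ ∧ ρ ξ β ≠ ρ ξ γ}.Finite := by
  induction γ using WellFoundedLT.induction with
  | ind γ ihγ =>
  intro β
  induction β using WellFoundedLT.induction with
  | ind β ihβ =>
  intro hβ hγβ
  rcases hγβ.eq_or_lt with rfl | h
  · simp
  rcases eq_or_ne γ 0 with rfl | h0
  · convert Set.finite_empty
    ext x; simp
  have hpos : 0 < γ := pos_iff_ne_zero.2 h0
  have hc := H.sup_mem hpos h hβ
  obtain ⟨e1, e2, e3⟩ := H.inf_mem h hβ
  set c := sSup (C β ∩ Iio γ) with hcdef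
  set η := sInf (C β \ Iio γ) with hη
  have hηo := e3.trans hβ
  have f1 := ihβ η e3 hηo e2
  have f2 := H.fin_one (C β ∩ Iio γ).ncard η hηo
  have f3 := ihγ c hc.2 β hβ ((le_of_lt hc.2).trans hγβ)
  have f4 := ihγ c hc.2 γ (h.trans hβ) (le_of_lt hc.2)
  refine (((f1.union f2).union (f3.union f4)).union (finite_singleton c)).subset ?_
  rintro ξ ⟨hξ, hne⟩
  simp only [mem_union, mem_ofPred_eq, mem_singleton_iff]
  rcases lt_trichotomy ξ c with h' | h' | h'
  · left; right
    by_contra! hcon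
    exact hne ((hcon.1 h').trans (hcon.2 h').symm)
  · right; exact h'
  · left; left
    by_contra! hcon
    apply hne
    rw [H.hρrec ξ β (hξ.trans h) hβ, H.inter_eq h hβ h' hξ.le, H.diff_eq h hβ h' hξ.le, ← hη,
      max_eq_right (hcon.2 (hξ.trans_le e2)).le]
    exact hcon.1 hξ

theorem coh (H : CSeq C L ρ) {γ a b : Ordinal.{u}} (ha : a < omega1) (hb : b < omega1)
    (h1 : γ ≤ a) (h2 : γ ≤ b) : {ξ | ξ < γ ∧ ρ ξ a ≠ ρ ξ b}.Finite := by
  refine ((H.coh' γ a ha h1).union (H.coh' γ b hb h2)).subset ?_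
  rintro ξ ⟨hξ, hne⟩
  by_contra hcon
  simp only [mem_union, mem_ofPred_eq] at hcon
  push Not at hcon
  exact hne ((hcon.1 hξ).trans (hcon.2 hξ).symm)

theorem L_fin (H : CSeq C L ρ) {α : Ordinal.{u}} (h0 : 0 < α) (β : Ordinal.{u}) :
    β < omega1 → α ≤ β → (L α β).Finite ∧ L α β ⊆ Iio α := by
  induction β using WellFoundedLT.induction with
  | ind β ih =>
  intro hβ hαβ
  rcases hαβ.eq_or_lt with rfl | h
  · rw [H.hL0]; simp
  rw [H.hLrec α β h0 h hβ]
  obtain ⟨e1, e2, e3⟩ := H.inf_mem h hβ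
  have := ih _ e3 (e3.trans hβ) e2
  refine ⟨(this.1.subset (sep_subset _ _)).insert _, ?_⟩
  rintro x (rfl | hx)
  · exact (H.sup_mem h0 h hβ).2
  · exact this.2 hx.1

theorem L_ge (H : CSeq C L ρ) {α β x y : Ordinal.{u}} (h0 : 0 < α) (h : α < β) (hβ : β < omega1)
    (hx : x ∈ C β) (hxα : x < α) (hy : y ∈ L α β) : x ≤ y := by
  rw [H.hLrec α β h0 h hβ] at hy
  refine (H.le_sup h hβ hx hxα).trans ?_
  rcases hy with rfl | hy
  · exact le_rfl
  · exact hy.2.le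

theorem L_ne (H : CSeq C L ρ) {α β : Ordinal.{u}} (h0 : 0 < α) (h : α < β) (hβ : β < omega1) :
    (L α β).Nonempty := by
  rw [H.hLrec α β h0 h hβ]
  exact insert_nonempty _ _

theorem L_union (H : CSeq C L ρ) {α β : Ordinal.{u}} (h0 : 0 < α) (hαβ : α ≤ β) (γ : Ordinal.{u}) :
    γ < omega1 → β ≤ γ → (∀ x ∈ L β γ, ∀ y ∈ L α β, x < y) → L α γ = L β γ ∪ L α β := by
  induction γ using WellFoundedLT.induction with
  | ind γ ih =>
  intro hγ hβγ hlt
  rcases hβγ.eq_or_lt with rfl | h2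
  · rw [H.hL0]; simp
  rcases hαβ.eq_or_lt with rfl | h1
  · rw [H.hL0]; simp
  have hβ0 : 0 < β := h0.trans h1
  have hβo : β < omega1 := h2.trans hγ
  have hr := H.hLrec β γ hβ0 h2 hγ
  obtain ⟨e1, e2, e3⟩ := H.inf_mem h2 hγ
  set c := sSup (C γ ∩ Iio β) with hc
  set η := sInf (C γ \ Iio β) with hη
  have hcm : c ∈ L β γ := by rw [hr]; exact mem_insert _ _
  obtain ⟨y, hy⟩ := H.L_ne h0 h1 hβo
  have hcα : c < α := (hlt c hcm y hy).trans ((H.L_fin h0 β hβo hαβ).2 hy)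
  have hr' := H.hLrec α γ h0 (h1.trans h2) hγ
  rw [H.inter_eq h2 hγ hcα hαβ, H.diff_eq h2 hγ hcα hαβ, ← hc, ← hη] at hr'
  have hi := ih η e3 (e3.trans hγ) e2 (by
    intro x hx y hy
    rcases lt_or_ge c x with h | h
    · exact hlt x (by rw [hr]; exact Or.inr ⟨hx, h⟩) y hy
    · exact h.trans_lt (hlt c hcm y hy))
  rw [hr', hr, hi]
  ext z
  simp only [mem_insert_iff, mem_union, mem_ofPred_eq]
  constructor
  · rintro (h | ⟨h | h, h'⟩)
    · exact Or.inl (Or.inl h)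
    · exact Or.inl (Or.inr ⟨h, h'⟩)
    · exact Or.inr h
  · rintro ((h | h) | h)
    · exact Or.inl h
    · exact Or.inr ⟨Or.inl h.1, h.2⟩
    · exact Or.inr ⟨Or.inr h, hlt c hcm z h⟩

/-- Largeness on finite sets. -/
theorem large_n (H : CSeq C L ρ) {A : Set Ordinal.{u}} (hA : A ⊆ Iio omega1) (hAu : ¬ A.Countable)
    (n : ℕ) : ∃ ν < omega1, ∀ F : Set Ordinal.{u}, F.Finite → F ⊆ Iio omega1 → (∀ x ∈ F, ν ≤ x) →
      ∀ ζ < omega1, ∃ a ∈ A, ζ < a ∧ ∀ x ∈ F, n < ρ x a := by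
  by_contra! hcon
  have step : ∀ ν : Ordinal.{u}, ∃ (F : Set Ordinal.{u}) (μ : Ordinal.{u}), ν < omega1 →
      μ < omega1 ∧ ν < μ ∧ (∀ x ∈ F, ν ≤ x ∧ x < μ) ∧ ∀ a ∈ A, μ < a → ∃ x ∈ F, ρ x a ≤ n := by
    intro ν
    by_cases hν : ν < omega1
    swap
    · exact ⟨∅, 0, fun h => absurd h hν⟩
    obtain ⟨F, hF, hFo, hFν, ζ, hζ, hb⟩ := hcon ν hν
    obtain ⟨μ, hμ, hμ'⟩ := om_bdd (S := F ∪ {ζ, ν}) (hF.countable.union (by simp)) (by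
      rintro x (hx | rfl | rfl)
      · exact hFo hx
      · exact hζ
      · exact hν)
    refine ⟨F, μ, fun _ => ⟨hμ, hμ' ν (by simp), fun x hx => ⟨hFν x hx, hμ' x (by simp [hx])⟩, ?_⟩⟩
    intro a ha hμa
    exact hb a ha ((hμ' ζ (by simp)).trans hμa)
  choose F g hg using step
  let d : ℕ → Ordinal.{u} := fun n => g^[n] 0
  have hd : ∀ n, d (n+1) = g (d n) := fun n => Function.iterate_succ_apply' g n 0
  have hdo : ∀ n, d n < omega1 := by
    intro n
    induction n with
    | zero => exact om_pos
    | succ n ih => rw [hd]; exact (hg _ ih).1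
  obtain ⟨γ, hγ, hγ'⟩ := om_bdd (countable_range d) (by rintro _ ⟨i, rfl⟩; exact hdo i)
  obtain ⟨a, ha, hγa⟩ := om_unb hAu hγ
  have hda : ∀ k, d k < a := fun k => (hγ' _ ⟨k, rfl⟩).trans hγa
  have : ∀ k, ∃ x, d k ≤ x ∧ x < d (k+1) ∧ ρ x a ≤ n := by
    intro k
    obtain ⟨-, -, h2, h3⟩ := hg (d k) (hdo k)
    obtain ⟨x, hx, hx'⟩ := h3 a ha (by rw [← hd]; exact hda _)
    exact ⟨x, (h2 x hx).1, by rw [hd]; exact (h2 x hx).2, hx'⟩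
  choose x h1 h2 h3 using this
  have hmono : StrictMono x := strictMono_nat_of_lt_succ fun k => (h2 k).trans_le (h1 (k+1))
  refine Set.infinite_range_of_injective hmono.injective ((H.fin_one n a (hA ha)).subset ?_)
  rintro _ ⟨k, rfl⟩
  exact ⟨(h2 k).trans (hda _), h3 k⟩

theorem large (H : CSeq C L ρ) {A : Set Ordinal.{u}} (hA : A ⊆ Iio omega1) (hAu : ¬ A.Countable) :
    ∃ ν < omega1, ∀ n : ℕ, ∀ F : Set Ordinal.{u}, F.Finite → F ⊆ Iio omega1 → (∀ x ∈ F, ν ≤ x) →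
      ∀ ζ < omega1, ∃ a ∈ A, ζ < a ∧ ∀ x ∈ F, n < ρ x a := by
  choose ν h1 h2 using fun n => H.large_n hA hAu n
  obtain ⟨γ, hγ, hγ'⟩ := om_bdd (countable_range ν) (by rintro _ ⟨i, rfl⟩; exact h1 i)
  refine ⟨γ, hγ, fun n F hF hFo hFγ => h2 n F hF hFo fun x hx => ?_⟩
  exact (hγ' _ ⟨n, rfl⟩).le.trans (hFγ x hx)

end CSeq

theorem osc_congr {s s' t t' : Ordinal.{u} → ℕ} {F : Set Ordinal.{u}}
    (hs : ∀ x ∈ F, s x = s' x) (ht : ∀ x ∈ F, t x = t' x) : OscSet s t F = OscSet s' t' F := by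
  ext ξ
  constructor
  · rintro ⟨h1, η, h2, h3, h4, h5, h6⟩
    refine ⟨h1, η, h2, h3, h4, ?_, ?_⟩
    · rwa [← hs η h2, ← ht η h2]
    · rwa [← hs ξ h1, ← ht ξ h1]
  · rintro ⟨h1, η, h2, h3, h4, h5, h6⟩
    refine ⟨h1, η, h2, h3, h4, ?_, ?_⟩
    · rwa [hs η h2, ht η h2]
    · rwa [hs ξ h1, ht ξ h1]

theorem osc_union {s t : Ordinal.{u} → ℕ} {F E : Set Ordinal.{u}}
    (hlt : ∀ x ∈ F, ∀ y ∈ E, x < y) (hlast : ∀ x ∈ F, (∀ y ∈ F, y ≤ x) → t x < s x) :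
    OscSet s t (F ∪ E) = OscSet s t F ∪ OscSet s t E := by
  ext ξ
  constructor
  · rintro ⟨h1 | h1, η, h2 | h2, h3, h4, h5, h6⟩
    · exact Or.inl ⟨h1, η, h2, h3, fun ζ hζ => h4 ζ (Or.inl hζ), h5, h6⟩
    · exact absurd (hlt ξ h1 η h2) h3.not_gt
    · have := hlast η h2 (fun y hy => h4 y (Or.inl hy) (hlt y hy ξ h1))
      omega
    · exact Or.inr ⟨h1, η, h2, h3, fun ζ hζ => h4 ζ (Or.inr hζ), h5, h6⟩
  · rintro (⟨h1, η, h2, h3, h4, h5, h6⟩ | ⟨h1, η, h2, h3, h4, h5, h6⟩)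
    · refine ⟨Or.inl h1, η, Or.inl h2, h3, ?_, h5, h6⟩
      rintro ζ (hζ | hζ) hlt'
      · exact h4 ζ hζ hlt'
      · exact absurd (hlt ξ h1 ζ hζ) hlt'.not_gt
    · refine ⟨Or.inr h1, η, Or.inr h2, h3, ?_, h5, h6⟩
      rintro ζ (hζ | hζ) hlt'
      · exact (hlt ζ hζ η h2).le
      · exact h4 ζ hζ hlt'

theorem osc_union_ncard {s t : Ordinal.{u} → ℕ} {F E : Set Ordinal.{u}} (hF : F.Finite)
    (hE : E.Finite)
    (hlt : ∀ x ∈ F, ∀ y ∈ E, x < y) (hlast : ∀ x ∈ F, (∀ y ∈ F, y ≤ x) → t x < s x) :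
    (OscSet s t (F ∪ E)).ncard = (OscSet s t F).ncard + (OscSet s t E).ncard := by
  rw [osc_union hlt hlast]
  apply Set.ncard_union_eq
  · rw [Set.disjoint_left]
    intro x hx hy
    exact lt_irrefl x (hlt x hx.1 x hy.1)
  · exact hF.subset fun x hx => hx.1
  · exact hE.subset fun x hx => hx.1

theorem osc_block {s t : Ordinal.{u} → ℕ} {F E : Set Ordinal.{u}} (hF : F.Finite)
    (hFn : F.Nonempty) (hEn : E.Nonempty)
    (hlt : ∀ x ∈ F, ∀ y ∈ E, x < y) (h1 : ∀ x ∈ F, s x ≤ t x) (h2 : ∀ x ∈ E, t x < s x) :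
    (OscSet s t (F ∪ E)).ncard = 1 := by
  rw [Set.ncard_eq_one]
  refine ⟨sInf E, ?_⟩
  have hm : sInf E ∈ E := csInf_mem hEn
  have hM : sSup F ∈ F := hFn.csSup_mem hF
  ext ξ
  rw [mem_singleton_iff]
  constructor
  · rintro ⟨k1, η, k2, k3, k4, k5, k6⟩
    have hξ : ξ ∈ E := by
      rcases k1 with k1 | k1
      · have := h1 ξ k1; omega
      · exact k1
    have hη : η ∈ F := by
      rcases k2 with k2 | k2
      · exact k2
      · have := h2 η k2; omega
    by_contra hne
    have hl : sInf E < ξ := lt_of_le_of_ne (csInf_le (OrderBot.bddBelow _) hξ) (Ne.symm hne)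
    exact absurd (k4 _ (Or.inr hm) hl) (not_le.2 (hlt η hη _ hm))
  · rintro rfl
    refine ⟨Or.inr hm, sSup F, Or.inl hM, hlt _ hM _ hm, ?_, h1 _ hM, h2 _ hm⟩
    rintro ζ (hζ | hζ) hlt'
    · exact le_csSup hF.bddAbove hζ
    · exact absurd (csInf_le (OrderBot.bddBelow _) hζ) (not_le.2 hlt')

theorem star_exists (n : ℕ) : ∃ N, ∀ k, ∃ m ≤ N, starFn (k + m) = n := by
  set P := ∏ i ∈ Finset.range n, Nat.nth Nat.Prime i with hP
  set q := Nat.nth Nat.Prime n with hq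
  have hpr : ∀ i, Nat.Prime (Nat.nth Nat.Prime i) := Nat.prime_nth_prime
  have hqp : q.Prime := hpr n
  have hP0 : 0 < P := Finset.prod_pos fun i _ => (hpr i).pos
  have hqP : ¬ q ∣ P := by
    intro h
    obtain ⟨i, hi, h⟩ := (hqp.prime.dvd_finsetProd_iff _).1 h
    have h1 := (Nat.prime_dvd_prime_iff_eq hqp (hpr i)).1 h
    have h2 := Nat.nth_injective Nat.infinite_setOfPred_prime h1
    rw [Finset.mem_range] at hi
    omega
  have key : ∀ M, P ∣ M → ¬ q ∣ M → starFn M = n := by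
    intro M h1 h2
    have hM : M ≠ 0 := by rintro rfl; exact h2 (dvd_zero _)
    have : sInf {p | Nat.Prime p ∧ ¬ p ∣ M} = q := by
      apply IsLeast.csInf_eq
      refine ⟨⟨hqp, h2⟩, ?_⟩
      rintro p ⟨hp, hpM⟩
      by_contra hlt
      rw [not_le] at hlt
      apply hpM
      refine dvd_trans ?_ h1
      rw [← Nat.nth_count hp]
      apply Finset.dvd_prod_of_mem
      rw [Finset.mem_range]
      rw [← Nat.nth_count hp] at hlt
      exact (Nat.nth_lt_nth Nat.infinite_setOfPred_prime).1 hlt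
    rw [starFn, if_neg hM, this, hq]
    exact Nat.count_nth_of_infinite Nat.infinite_setOfPred_prime n
  refine ⟨2 * P, fun k => ?_⟩
  have hdiv := Nat.div_add_mod k P
  have hmod := Nat.mod_lt k hP0
  have hj : k + (P - k % P) = P * (k / P + 1) := by
    rw [mul_add, mul_one]; omega
  by_cases h : q ∣ k + (P - k % P)
  · refine ⟨(P - k % P) + P, by omega, key _ ?_ ?_⟩
    · rw [← add_assoc, hj]; exact dvd_add (dvd_mul_right _ _) dvd_rfl
    · rw [← add_assoc]
      intro h'
      exact hqP ((Nat.dvd_add_right h).1 h')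
  · exact ⟨P - k % P, by omega, key _ (by rw [hj]; exact dvd_mul_right _ _) h⟩

/-- Elements of `A` of a given finite type. -/
def typSet (ρ : Ordinal.{u} → Ordinal.{u} → ℕ) (A : Set Ordinal.{u}) (p : Set (Ordinal.{u} × ℕ)) :
    Set Ordinal.{u} := {a | a ∈ A ∧ ∀ x ∈ p, ρ x.1 a = x.2}

def xiSet (C : Ordinal.{u} → Set Ordinal.{u}) (L : Ordinal.{u} → Ordinal.{u} → Set Ordinal.{u})
    (ρ : Ordinal.{u} → Ordinal.{u} → ℕ) (A B : Set Ordinal.{u}) (p q : Set (Ordinal.{u} × ℕ))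
    (ξ : Ordinal.{u}) : Set Ordinal.{u} :=
  {δ | δ < omega1 ∧ ∃ a ∈ typSet ρ A p, ∃ b ∈ typSet ρ B q, δ < a ∧ δ < b ∧
    L δ b = Prod.fst '' q ∧ ξ ∈ C δ ∧ ∀ η, ξ ≤ η → η < δ → ρ η a ≤ ρ η b}

def parSet (γ : Ordinal.{u}) : Set (Set (Ordinal.{u} × ℕ)) :=
  {p | p.Finite ∧ p ⊆ Iio γ ×ˢ univ}

structure Good (C : Ordinal.{u} → Set Ordinal.{u}) (L : Ordinal.{u} → Ordinal.{u} → Set Ordinal.{u})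
    (ρ : Ordinal.{u} → Ordinal.{u} → ℕ) (A B : Set Ordinal.{u}) (δ : Ordinal.{u}) : Prop where
  lt : δ < omega1
  pos : 0 < δ
  lim : ∀ γ < δ, Order.succ γ < δ
  xi : ∀ p ∈ parSet δ, ∀ q ∈ parSet δ, ∀ ξ < δ, δ ∈ xiSet C L ρ A B p q ξ →
    ∃ δ' ∈ xiSet C L ρ A B p q ξ, δ < δ'
  nu : ∀ p ∈ parSet δ, ∀ a ∈ typSet ρ A p, δ ≤ a → ∃ ν < δ, ∀ n : ℕ,
    ∀ F : Set Ordinal.{u}, F.Finite → F ⊆ Iio omega1 → (∀ x ∈ F, ν ≤ x) →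
      ∀ ζ < omega1, ∃ a ∈ typSet ρ A p, ζ < a ∧ ∀ x ∈ F, n < ρ x a
  refl : ∀ p ∈ parSet δ, ∀ a ∈ typSet ρ A p, δ ≤ a → ∀ ξ < δ, ∃ a ∈ typSet ρ A p, ξ < a ∧ a < δ

theorem fin_bdd {δ : Ordinal.{u}} (h0 : 0 < δ) (hlim : ∀ γ < δ, Order.succ γ < δ)
    {F : Set Ordinal.{u}} (hF : F.Finite) (h : F ⊆ Iio δ) : ∃ γ < δ, ∀ x ∈ F, x < γ := by
  rcases F.eq_empty_or_nonempty with rfl | hne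
  · exact ⟨0, h0, by simp⟩
  · exact ⟨Order.succ (sSup F), hlim _ (h (hne.csSup_mem hF)),
      fun x hx => Order.lt_succ_iff.2 (le_csSup hF.bddAbove hx)⟩

theorem parSet_mono {γ γ' : Ordinal.{u}} (h : γ ≤ γ') : parSet γ ⊆ parSet γ' := by
  rintro p ⟨h1, h2⟩
  exact ⟨h1, fun x hx => ⟨(mem_Iio.1 (h2 hx).1).trans_le h, trivial⟩⟩

theorem parSet_countable {γ : Ordinal.{u}} (h : γ < omega1) : (parSet γ).Countable :=
  Set.countable_ofPred_finite_subset ((om_countable_Iio h).prod countable_univ)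

theorem parSet_bdd {δ : Ordinal.{u}} (h0 : 0 < δ) (hlim : ∀ γ < δ, Order.succ γ < δ)
    {p : Set (Ordinal.{u} × ℕ)} (hp : p ∈ parSet δ) : ∃ γ < δ, p ∈ parSet γ := by
  obtain ⟨γ, h1, h2⟩ := fin_bdd h0 hlim (hp.1.image Prod.fst) (by
    rintro _ ⟨x, hx, rfl⟩; exact (hp.2 hx).1)
  exact ⟨γ, h1, hp.1, fun x hx => ⟨h2 _ ⟨x, hx, rfl⟩, trivial⟩⟩

namespace CSeq

variable {C : Ordinal.{u} → Set Ordinal.{u}} {L : Ordinal.{u} → Ordinal.{u} → Set Ordinal.{u}}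
    {ρ : Ordinal.{u} → Ordinal.{u} → ℕ} {A B : Set Ordinal.{u}}

theorem exists_good (H : CSeq C L ρ) (hA : A ⊆ Iio omega1) :
    ∃ δ, Good C L ρ A B δ := by
  have hν : ∀ p : Set (Ordinal.{u} × ℕ), ∃ ν < omega1, ¬ (typSet ρ A p).Countable → ∀ n : ℕ,
    ∀ F : Set Ordinal.{u}, F.Finite → F ⊆ Iio omega1 → (∀ x ∈ F, ν ≤ x) →
      ∀ ζ < omega1, ∃ a ∈ typSet ρ A p, ζ < a ∧ ∀ x ∈ F, n < ρ x a := by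
    intro p
    by_cases h : (typSet ρ A p).Countable
    · exact ⟨0, om_pos, fun h' => absurd h h'⟩
    · obtain ⟨ν, h1, h2⟩ := H.large (fun a ha => hA ha.1) h
      exact ⟨ν, h1, fun _ => h2⟩
  choose ν hν1 hν2 using hν
  have hh : ∀ (p : Set (Ordinal.{u} × ℕ)) (ξ : Ordinal.{u}), ∃ a < omega1,
      ¬ (typSet ρ A p).Countable → ξ < omega1 → a ∈ typSet ρ A p ∧ ξ < a := by
    intro p ξ
    by_cases h : ¬ (typSet ρ A p).Countable ∧ ξ < omega1
    · obtain ⟨a, h1, h2⟩ := om_unb h.1 h.2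
      exact ⟨a, hA h1.1, fun _ _ => ⟨h1, h2⟩⟩
    · exact ⟨0, om_pos, fun h1 h2 => absurd ⟨h1, h2⟩ h⟩
  choose h hh1 hh2 using hh
  let P : Ordinal.{u} → Set (Set Ordinal.{u}) := fun γ =>
    (fun x : Set (Ordinal.{u} × ℕ) × Set (Ordinal.{u} × ℕ) × Ordinal.{u} =>
      xiSet C L ρ A B x.1 x.2.1 x.2.2) '' (parSet γ ×ˢ parSet γ ×ˢ Iio γ) ∪
    ((fun p => typSet ρ A p) '' parSet γ ∪
    ((fun p => {ν p}) '' parSet γ ∪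
    (fun x : Set (Ordinal.{u} × ℕ) × Ordinal.{u} => {h x.1 x.2}) '' (parSet γ ×ˢ Iio γ)))
  obtain ⟨δ, hδ, h0, hlim, hr⟩ := om_reflect P
    (by
      intro γ hγ
      have c1 := parSet_countable hγ
      have c2 := om_countable_Iio hγ
      exact ((c1.prod (c1.prod c2)).image _).union ((c1.image _).union
        ((c1.image _).union ((c1.prod c2).image _))))
    (by
      intro γ γ' S hγ hS
      have m1 := parSet_mono hγ
      have m2 : Iio γ ⊆ Iio γ' := Iio_subset_Iio hγ
      exact union_subset_union (image_mono (prod_mono m1 (prod_mono m1 m2)))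
        (union_subset_union (image_mono m1) (union_subset_union (image_mono m1)
          (image_mono (prod_mono m1 m2)))) hS)
  have hunc : ∀ p ∈ parSet δ, ∀ a ∈ typSet ρ A p, δ ≤ a → ¬ (typSet ρ A p).Countable := by
    intro p hp a ha hδa hc
    obtain ⟨γ, hγ, hp⟩ := parSet_bdd h0 hlim hp
    exact absurd (hr γ hγ _ (Or.inr (Or.inl ⟨p, hp, rfl⟩)) (fun a ha => hA ha.1) hc a ha)
      hδa.not_gt
  refine ⟨δ, hδ, h0, hlim, ?_, ?_, ?_⟩
  · intro p hp q hq ξ hξ hmem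
    obtain ⟨γ1, hγ1, hp⟩ := parSet_bdd h0 hlim hp
    obtain ⟨γ2, hγ2, hq⟩ := parSet_bdd h0 hlim hq
    have hγ : max (max γ1 γ2) (Order.succ ξ) < δ := max_lt (max_lt hγ1 hγ2) (hlim _ hξ)
    set γ := max (max γ1 γ2) (Order.succ ξ) with hγdef
    refine om_unb (fun hc => ?_) hδ
    refine absurd (hr γ hγ _ (Or.inl ⟨(p, q, ξ), ⟨?_, ?_, ?_⟩, rfl⟩) (fun a ha => ha.1) hc δ hmem)
      (lt_irrefl _)
    · exact parSet_mono ((le_max_left _ _).trans (le_max_left _ _)) hp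
    · exact parSet_mono ((le_max_right _ _).trans (le_max_left _ _)) hq
    · exact (Order.lt_succ ξ).trans_le (le_max_right _ _)
  · intro p hp a ha hδa
    have hu := hunc p hp a ha hδa
    obtain ⟨γ, hγ, hp⟩ := parSet_bdd h0 hlim hp
    refine ⟨ν p, ?_, hν2 p hu⟩
    exact hr γ hγ {ν p} (Or.inr (Or.inr (Or.inl ⟨p, hp, rfl⟩)))
      (singleton_subset_iff.2 (hν1 p)) (countable_singleton _) _ rfl
  · intro p hp a ha hδa ξ hξ
    have hu := hunc p hp a ha hδa
    obtain ⟨γ, hγ, hp⟩ := parSet_bdd h0 hlim hp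
    have hm := hh2 p ξ hu (hξ.trans hδ)
    refine ⟨h p ξ, hm.1, hm.2, ?_⟩
    refine hr (max γ (Order.succ ξ)) (max_lt hγ (hlim _ hξ)) {h p ξ}
      (Or.inr (Or.inr (Or.inr ⟨(p, ξ), ⟨?_, ?_⟩, rfl⟩)))
      (singleton_subset_iff.2 (hh1 p ξ)) (countable_singleton _) _ rfl
    · exact parSet_mono (le_max_left _ _) hp
    · exact (Order.lt_succ ξ).trans_le (le_max_right _ _)

theorem mem_par {δ a : Ordinal.{u}} {F : Set Ordinal.{u}} (hF : F.Finite) (h : F ⊆ Iio δ) :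
    (fun x => (x, ρ x a)) '' F ∈ parSet δ :=
  ⟨hF.image _, by rintro _ ⟨x, hx, rfl⟩; exact ⟨h hx, trivial⟩⟩

theorem mem_typ {a a' : Ordinal.{u}} {F : Set Ordinal.{u}} :
    a' ∈ typSet ρ A ((fun x => (x, ρ x a)) '' F) ↔ a' ∈ A ∧ ∀ x ∈ F, ρ x a' = ρ x a := by
  simp [typSet]

theorem step (H : CSeq C L ρ) (hA : A ⊆ Iio omega1) (hB : B ⊆ Iio omega1) {δ : Ordinal.{u}}
    (G : Good C L ρ A B δ) {a b : Ordinal.{u}} (ha : a ∈ A) (hb : b ∈ B) (hδa : δ < a)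
    (hδb : δ < b) :
    ∃ b' ∈ B, δ < b' ∧ ∃ E : Set Ordinal.{u}, E.Finite ∧ E.Nonempty ∧
      (∀ x ∈ L δ b, ∀ y ∈ E, x < y) ∧ L δ b' = L δ b ∪ E ∧ (∀ x ∈ L δ b, ρ x b' = ρ x b) ∧
      (∃ a₁ ∈ A, δ < a₁ ∧ (∀ x ∈ L δ b, ρ x a₁ = ρ x a) ∧ ∀ x ∈ E, ρ x a₁ ≤ ρ x b') ∧
      (∃ a₂ ∈ A, δ < a₂ ∧ (∀ x ∈ L δ b, ρ x a₂ = ρ x a) ∧ ∀ x ∈ E, ρ x b' < ρ x a₂) := by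
  obtain ⟨hF, hFδ⟩ := H.L_fin G.pos b (hB hb) hδb.le
  set F := L δ b with hFdef
  have hp := mem_par (ρ := ρ) (a := a) hF hFδ
  have hq := mem_par (ρ := ρ) (a := b) hF hFδ
  obtain ⟨ν, hν, hlarge⟩ := G.nu _ hp a (mem_typ.2 ⟨ha, fun _ _ => rfl⟩) hδa.le
  have hcoh := H.coh (hA ha) (hB hb) hδa.le hδb.le
  obtain ⟨γ, hγ, hγ'⟩ := fin_bdd G.pos G.lim ((hF.union hcoh).union (finite_singleton ν)) (by
    rintro x ((hx | hx) | rfl)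
    · exact hFδ hx
    · exact hx.1
    · exact hν)
  obtain ⟨hC1, -, hC2, -⟩ := H.hC δ G.pos G.lt
  obtain ⟨ξ, hξ, hγξ⟩ := hC2 γ hγ
  have hξδ : ξ < δ := hC1 hξ
  obtain ⟨δ', ⟨hδ'o, a₁, ha₁, b', hb', hδ'a, hδ'b, hL, hξ', hle⟩, hδδ'⟩ :=
    G.xi _ hp _ hq ξ hξδ ⟨G.lt, a, mem_typ.2 ⟨ha, fun _ _ => rfl⟩, b,
      mem_typ.2 ⟨hb, fun _ _ => rfl⟩, hδa, hδb, by simp [image_image, hFdef], hξ, by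
        intro η h1 h2
        by_contra hcon
        have : η < γ := hγ' η (Or.inl (Or.inr ⟨h2, fun h => hcon h.le⟩))
        exact absurd (hγξ.trans h1) (not_le.2 this)⟩
  rw [mem_typ] at ha₁ hb'
  simp only [image_image, image_id'] at hL
  obtain ⟨hE, hEδ⟩ := H.L_fin G.pos δ' hδ'o hδδ'.le
  have hEξ : ∀ y ∈ L δ δ', ξ ≤ y := fun y hy => H.L_ge G.pos hδδ' hδ'o hξ' hξδ hy
  have hFE : ∀ x ∈ F, ∀ y ∈ L δ δ', x < y := fun x hx y hy =>
    (hγ' x (Or.inl (Or.inl hx))).trans_le (hγξ.trans (hEξ y hy))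
  refine ⟨b', hb'.1, hδδ'.trans hδ'b, L δ δ', hE, H.L_ne G.pos hδδ' hδ'o, hFE, ?_, hb'.2,
    ⟨a₁, ha₁.1, hδδ'.trans hδ'a, ha₁.2, ?_⟩, ?_⟩
  · rw [← hL]
    apply H.L_union G.pos hδδ'.le b' (hB hb'.1) hδ'b.le
    rw [hL]
    exact hFE
  · intro x hx
    exact hle x (hEξ x hx) (lt_trans (hEδ hx) hδδ')
  · obtain ⟨n, hn⟩ := (hE.image fun x => ρ x b').bddAbove
    obtain ⟨a₂, h1, h2, h3⟩ := hlarge n (L δ δ') hE (fun x hx => lt_trans (hEδ hx) G.lt)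
      (fun x hx => (hγ' ν (Or.inr rfl)).le.trans (hγξ.trans (hEξ x hx))) δ G.lt
    rw [mem_typ] at h1
    exact ⟨a₂, h1.1, h2, h1.2, fun x hx => (hn ⟨x, hx, rfl⟩).trans_lt (h3 x hx)⟩

theorem chain (H : CSeq C L ρ) (hA : A ⊆ Iio omega1) (hB : B ⊆ Iio omega1)
    (hAu : ¬ A.Countable) (hBu : ¬ B.Countable) {δ : Ordinal.{u}}
    (G : Good C L ρ A B δ) (N : ℕ) :
    ∃ a ∈ A, δ < a ∧ ∃ (b : ℕ → Ordinal.{u}) (k : ℕ), ∀ m ≤ N, b m ∈ B ∧ δ < b m ∧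
      L δ (b m) ⊆ L δ (b N) ∧
      (OscSet (fun η => ρ η a) (fun η => ρ η (b m)) (L δ (b m))).ncard = k + m ∧
      (∀ x ∈ L δ (b m), (∀ y ∈ L δ (b m), y ≤ x) → ρ x (b m) < ρ x a) := by
  induction N with
  | zero =>
    obtain ⟨a, ha, hδa⟩ := om_unb hAu G.lt
    obtain ⟨b, hb, hδb⟩ := om_unb hBu G.lt
    obtain ⟨b', hb', hδb', E, hE, ⟨y, hy⟩, hFE, hL, hbb, -, a₂, ha₂, hδa₂, haa, hgt⟩ :=
      H.step hA hB G ha hb hδa hδb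
    refine ⟨a₂, ha₂, hδa₂, fun _ => b',
      (OscSet (fun η => ρ η a₂) (fun η => ρ η b') (L δ b')).ncard, ?_⟩
    intro m hm
    obtain rfl : m = 0 := by omega
    refine ⟨hb', hδb', le_rfl, rfl, ?_⟩
    rw [hL]
    rintro x (hx | hx) hmax
    · exact absurd (hmax y (Or.inr hy)) (not_le.2 (hFE x hx y hy))
    · exact hgt x hx
  | succ N ih =>
    obtain ⟨a, ha, hδa, b, k, hk⟩ := ih
    obtain ⟨hbN, hδbN, -, hcN, hlN⟩ := hk N le_rfl
    obtain ⟨b', hb', hδb', E, hE, hEn, hFE, hL, hbb, ⟨a₁, ha₁, hδa₁, haa, hle⟩, -⟩ :=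
      H.step hA hB G ha hbN hδa hδbN
    obtain ⟨b'', hb'', hδb'', E', hE', hEn', hFE', hL', hbb', -, ⟨a₂, ha₂, hδa₂, haa', hgt⟩⟩ :=
      H.step hA hB G ha₁ hb' hδa₁ hδb'
    rw [hL] at hFE' hL' hbb' haa'
    have hag : ∀ x ∈ L δ (b N), ρ x a₂ = ρ x a := fun x hx =>
      (haa' x (Or.inl hx)).trans (haa x hx)
    have hbg : ∀ x ∈ L δ (b N), ρ x b'' = ρ x (b N) := fun x hx =>
      (hbb' x (Or.inl hx)).trans (hbb x hx)
    refine ⟨a₂, ha₂, hδa₂, Function.update b (N+1) b'', k, ?_⟩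
    intro m hm
    rcases hm.eq_or_lt with rfl | hm
    · simp only [Function.update_self]
      refine ⟨hb'', hδb'', le_rfl, ?_, ?_⟩
      · rw [hL', union_assoc, osc_union_ncard, osc_block hE hEn hEn', ← add_assoc, ← hcN]
        · congr 2
          exact osc_congr hag hbg
        · intro x hx y hy; exact hFE' x (Or.inr hx) y hy
        · intro x hx
          rw [haa' x (Or.inr hx), hbb' x (Or.inr hx)]
          exact hle x hx
        · exact hgt
        · exact (H.L_fin G.pos _ (hB hbN) hδbN.le).1
        · exact hE.union hE'
        · rintro x hx y (hy | hy)
          · exact hFE x hx y hy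
          · exact hFE' x (Or.inl hx) y hy
        · intro x hx hmax
          rw [hag x hx, hbg x hx]
          exact hlN x hx hmax
      · rw [hL']
        obtain ⟨y, hy⟩ := hEn'
        rintro x (hx | hx) hmax
        · exact absurd (hmax y (Or.inr hy)) (not_le.2 (hFE' x hx y hy))
        · exact hgt x hx
    · have hm' : m ≤ N := by omega
      rw [Function.update_of_ne (by omega), Function.update_self]
      obtain ⟨h1, h2, h3, h4, h5⟩ := hk m hm'
      refine ⟨h1, h2, ?_, ?_, ?_⟩
      · rw [hL', union_assoc]
        exact h3.trans subset_union_left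
      · rw [← h4]
        congr 1
        exact osc_congr (fun x hx => hag x (h3 hx)) (fun _ _ => rfl)
      · intro x hx hmax
        rw [hag x (h3 hx)]
        exact h5 x hx hmax

theorem consecutive (H : CSeq C L ρ) (hA : A ⊆ Iio omega1) (hB : B ⊆ Iio omega1)
    (hAu : ¬ A.Countable) (hBu : ¬ B.Countable) (N : ℕ) :
    ∃ k, ∀ m ≤ N, ∃ α ∈ A, ∃ β ∈ B, α < β ∧
      (OscSet (fun η => ρ η α) (fun η => ρ η β) (L α β)).ncard = k + m := by
  obtain ⟨δ, G⟩ := H.exists_good (B := B) hA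
  obtain ⟨a, ha, hδa, b, k, hk⟩ := H.chain hA hB hAu hBu G N
  obtain ⟨hbN, hδbN, -, -, -⟩ := hk N le_rfl
  obtain ⟨hb0, hδb0, -, -, -⟩ := hk 0 (Nat.zero_le _)
  obtain ⟨hF, hFδ⟩ := H.L_fin G.pos _ (hB hbN) hδbN.le
  have hdis : (⋃ m ∈ Iic N, {ξ | ξ < δ ∧ ρ ξ (b m) ≠ ρ ξ (b 0)}).Finite := by
    refine (finite_Iic N).biUnion fun m hm => ?_
    obtain ⟨h1, h2, -, -, -⟩ := hk m hm
    exact H.coh (hB h1) (hB hb0) h2.le hδb0.le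
  obtain ⟨γ, hγ, hγ'⟩ := fin_bdd G.pos G.lim (hF.union hdis) (by
    rintro x (hx | hx)
    · exact hFδ hx
    · simp only [mem_iUnion] at hx
      obtain ⟨m, hm, hx⟩ := hx
      exact hx.1)
  obtain ⟨hC1, -, hC2, -⟩ := H.hC δ G.pos G.lt
  obtain ⟨ξ, hξ, hγξ⟩ := hC2 γ hγ
  have hξδ : ξ < δ := hC1 hξ
  obtain ⟨α, hα, hξα, hαδ⟩ := G.refl _ (mem_par (ρ := ρ) (a := a) hF hFδ) a
    (mem_typ.2 ⟨ha, fun _ _ => rfl⟩) hδa.le ξ hξδ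
  rw [mem_typ] at hα
  have hα0 : 0 < α := pos_of_lt hξα
  obtain ⟨hE, hEα⟩ := H.L_fin hα0 δ G.lt hαδ.le
  have hEξ : ∀ y ∈ L α δ, ξ ≤ y := fun y hy => H.L_ge hα0 hαδ G.lt hξ hξα hy
  refine ⟨k + (OscSet (fun η => ρ η α) (fun η => ρ η (b 0)) (L α δ)).ncard, fun m hm => ?_⟩
  obtain ⟨h1, h2, h3, h4, h5⟩ := hk m hm
  have hFE : ∀ x ∈ L δ (b m), ∀ y ∈ L α δ, x < y := fun x hx y hy =>
    (hγ' x (Or.inl (h3 hx))).trans_le (hγξ.trans (hEξ y hy))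
  refine ⟨α, hα.1, b m, h1, hαδ.trans h2, ?_⟩
  rw [H.L_union hα0 hαδ.le (b m) (hB h1) h2.le hFE,
    osc_union_ncard (hF.subset h3) hE hFE]
  · rw [osc_congr (s' := fun η => ρ η a) (t' := fun η => ρ η (b m)) (F := L δ (b m))
      (fun x hx => hα.2 x (h3 hx)) (fun _ _ => rfl), h4,
      osc_congr (s' := fun η => ρ η α) (t' := fun η => ρ η (b 0)) (F := L α δ)
      (fun _ _ => rfl) ?_]
    · omega
    · intro x hx
      by_contra hne
      have : x < γ := hγ' x (Or.inr (by
        simp only [mem_iUnion]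
        exact ⟨m, hm, lt_trans (hEα hx) hαδ, hne⟩))
      exact absurd (hγξ.trans (hEξ x hx)) (not_le.2 this)
  · intro x hx hmax
    rw [hα.2 x (h3 hx)]
    exact h5 x hx hmax

end CSeq

/-- **Theorem (Moore).** For every pair of uncountable sets `A, B ⊆ ω₁` and every
`n < ω` there are `α ∈ A`, `β ∈ B` with `α < β` and `osc*(α,β) = n`; here
`osc(α,β) = |Osc(e_α, e_β; L(α,β))|` where `e_β(ξ) = ρ₁(ξ,β)`.  In particular
`osc*` witnesses `ω₁ ↛ [ω₁;ω₁]²_ω`. -/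
theorem statement10
    -- a C-sequence:
    (C : Ordinal → Set Ordinal)
    (hC : ∀ β : Ordinal, 0 < β → β < omega1 →
      C β ⊆ Set.Iio β ∧ (0 : Ordinal) ∈ C β ∧
      (∀ γ < β, ∃ x ∈ C β, γ ≤ x) ∧ (∀ γ < β, (C β ∩ Set.Iio γ).Finite))
    -- the associated lower trace:
    (L : Ordinal → Ordinal → Set Ordinal)
    (hL0 : ∀ α : Ordinal, L α α = ∅)
    (hLrec : ∀ α β : Ordinal, 0 < α → α < β → β < omega1 →
      L α β = insert (sSup (C β ∩ Set.Iio α))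
        {ξ ∈ L α (sInf (C β \ Set.Iio α)) | sSup (C β ∩ Set.Iio α) < ξ})
    -- the associated maximal weight (`e_β(α) = ρ₁(α,β) = ρ α β`):
    (ρ : Ordinal → Ordinal → ℕ)
    (hρ0 : ∀ α : Ordinal, ρ α α = 0)
    (hρrec : ∀ α β : Ordinal, α < β → β < omega1 →
      ρ α β = max (C β ∩ Set.Iio α).ncard (ρ α (sInf (C β \ Set.Iio α))))
    (A B : Set Ordinal) (hA : A ⊆ Set.Iio omega1) (hB : B ⊆ Set.Iio omega1)
    (hAu : ¬ A.Countable) (hBu : ¬ B.Countable) :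
    ∀ n : ℕ, ∃ α ∈ A, ∃ β ∈ B, α < β ∧
      starFn ((OscSet (fun η => ρ η α) (fun η => ρ η β) (L α β)).ncard) = n := by
  intro n
  obtain ⟨N, hN⟩ := star_exists n
  obtain ⟨k, hk⟩ := CSeq.consecutive (C := C) (L := L) (ρ := ρ) ⟨hC, hL0, hLrec, hρ0, hρrec⟩
    hA hB hAu hBu N
  obtain ⟨m, hm, hs⟩ := hN k
  obtain ⟨α, hα, β, hβ, hlt, hc⟩ := hk m hm
  exact ⟨α, hα, β, hβ, hlt, by rw [hc]; exact hs⟩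
end
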